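/- arXiv:2308.03634 — 2 statements merged into one kernel-verified Lean document; each statement's English description precedes it below -/
import Mathlib

section
/- Let 𝕏 be a σ-finite measure space and ℳ, 𝒩 Banach L^0(𝕏)-modules. Define |α|_π := ⋀{ Σ_{i=1}^n |v_i||w_i| : n ∈ ℕ, α = Σ_{i=1}^n v_i ⊗ w_i } for α ∈ ℳ ⊗ 𝒩, the lattice infimum in L^0(𝕏) over all representations of α. Then |·|_π is a pointwise norm on ℳ ⊗ 𝒩 (i.e. |α|_π = 0 if and only if α = 0, |α+β|_π ≤ |α|_π + |β|_π, and |f·α|_π = |f||α|_π for every f ∈ L^0(𝕏)); moreover |v ⊗ w|_π = |v||w| for every v ∈ ℳ and w ∈ 𝒩. -/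
/-!
All that matters about `L⁰` is that it is a Dedekind complete f-ring which is von Neumann regular:
one can divide by `f` on the support of `f`. Over such a ring the Hahn–Banach theorem holds: a
dominated functional extends by a vector `x` because the admissible values at `x` form a nonempty
order interval, and regularity reduces the bound on `z + f • x` to the case `f = 1`.

If `|ω v| ≤ C |v|`, then the slice map `v ⊗ w ↦ ω v • w` is bounded by `C |·|_π`. For elementary
tensors, choose `ω` with `C = 1` and `ω v = |v|`. For definiteness, Hahn–Banach gives, for finitely
many vectors of `ℳ`, an operator `T = ∑ ω i • u i` with bounded functionals `ω i` fixing all of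
them. If `v ⊗ w ↦ T v ⊗ w` fixes `α` and `|α|_π = 0`, then all slices of `α` vanish, and hence
`α = (T ⊗ 1) α = 0`.

Dedekind completeness of `L⁰` reduces to countable infima: the strictly increasing functional
`f ↦ ∫ arctan f`, taken against an equivalent finite measure, is minimized over these.
-/

open MeasureTheory Filter Set TensorProduct

noncomputable section

namespace Paper

variable {X : Type*} [MeasurableSpace X]

/-- The space `L⁰(𝕏)` of real-valued measurable functions up to `μ`-a.e. equality. -/
abbrev L0 (μ : Measure X) : Type _ := X →ₘ[μ] ℝ

instance (μ : Measure X) : CommRing (L0 μ) :=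
  { (inferInstance : AddCommGroup (L0 μ)), (inferInstance : CommMonoid (L0 μ)) with
    left_distrib := fun a b c => AEEqFun.toGerm_injective <| by
      simp only [AEEqFun.mul_toGerm, AEEqFun.add_toGerm, mul_add]
    right_distrib := fun a b c => AEEqFun.toGerm_injective <| by
      simp only [AEEqFun.mul_toGerm, AEEqFun.add_toGerm, add_mul]
    zero_mul := fun a => AEEqFun.toGerm_injective <| by
      simp only [AEEqFun.mul_toGerm, AEEqFun.zero_toGerm, zero_mul]
    mul_zero := fun a => AEEqFun.toGerm_injective <| by
      simp only [AEEqFun.mul_toGerm, AEEqFun.zero_toGerm, mul_zero] }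

/-- The distance on `L⁰(𝕏)` inducing the topology of convergence in measure, defined through
the auxiliary finite measure `μ.toFinite` (which satisfies `μ ≪ μ.toFinite ≪ μ`). -/
noncomputable def dL0 (μ : Measure X) [SFinite μ] (f g : L0 μ) : ℝ :=
  ∫ x, min |f x - g x| 1 ∂(μ.toFinite)

/-- A Banach `L⁰(𝕏)`-module: a module over `L⁰(𝕏)` endowed with a pointwise norm, complete
with respect to the induced distance. -/
class BanachMod (μ : Measure X) [SFinite μ] (M : Type*) [AddCommGroup M]
    [Module (L0 μ) M] where
  pn : M → L0 μ
  pn_nonneg : ∀ v : M, 0 ≤ pn v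
  pn_eq_zero : ∀ v : M, pn v = 0 ↔ v = 0
  pn_add_le : ∀ v w : M, pn (v + w) ≤ pn v + pn w
  pn_smul : ∀ (f : L0 μ) (v : M), pn (f • v) = |f| * pn v
  complete : ∀ u : ℕ → M,
    (∀ ε : ℝ, 0 < ε → ∃ N : ℕ, ∀ m ≥ N, ∀ n ≥ N, dL0 μ (pn (u m - u n)) 0 < ε) →
    ∃ v : M, Tendsto (fun n => dL0 μ (pn (u n - v)) 0) atTop (nhds 0)

/-- The pointwise norm of a Banach `L⁰(𝕏)`-module, with the measure explicit. -/
noncomputable def pn (μ : Measure X) [SFinite μ] {M : Type*} [AddCommGroup M]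
    [Module (L0 μ) M] [BanachMod μ M] (v : M) : L0 μ :=
  BanachMod.pn v

/-- The distance on a Banach `L⁰(𝕏)`-module. -/
noncomputable def dM (μ : Measure X) [SFinite μ] {M : Type*} [AddCommGroup M]
    [Module (L0 μ) M] [BanachMod μ M] (v w : M) : ℝ :=
  dL0 μ (pn μ (v - w)) 0

section Defs

variable (μ : Measure X) [SFinite μ]
variable {M N : Type*} [AddCommGroup M] [Module (L0 μ) M] [BanachMod μ M]
  [AddCommGroup N] [Module (L0 μ) N] [BanachMod μ N]

/-- The set of admissible bounds of a map between Banach `L⁰(𝕏)`-modules; the pointwise norm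
`|T|` of a homomorphism is the infimum of this set. -/
def homBddSet (T : M → N) : Set (L0 μ) :=
  {g | 0 ≤ g ∧ ∀ v, pn μ (T v) ≤ g * pn μ v}

/-- A homomorphism of Banach `L⁰(𝕏)`-modules: an `L⁰(𝕏)`-linear map admitting a bound
`g ∈ L⁰(𝕏)⁺` with `|T v| ≤ g |v|` (equivalently, `L⁰(𝕏)`-linear and continuous). -/
def IsHom (T : M →ₗ[L0 μ] N) : Prop :=
  ∃ g, g ∈ homBddSet μ (⇑T)

/-- The set of admissible bounds of an `L⁰(𝕏)`-valued map (for elements of the dual module). -/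
def dualBddSet (ω : M → L0 μ) : Set (L0 μ) :=
  {g | 0 ≤ g ∧ ∀ v, |ω v| ≤ g * pn μ v}

/-- Membership in the dual module `ℳ*`: an `L⁰(𝕏)`-linear map `ω : ℳ → L⁰(𝕏)` admitting a
bound `g ∈ L⁰(𝕏)⁺` with `|ω v| ≤ g |v|`. -/
def IsDual (ω : M →ₗ[L0 μ] L0 μ) : Prop :=
  ∃ g, g ∈ dualBddSet μ (⇑ω)

/-- Membership in the unit disc `𝔻_{ℳ*}` of the dual module: `|ω| ≤ 1`, equivalently
`|ω v| ≤ |v|` for every `v`. -/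
def InDualDisc (ω : M →ₗ[L0 μ] L0 μ) : Prop :=
  ∀ v, |ω v| ≤ pn μ v

/-- The family of pointwise norms `|s - ∑_{i ∈ F ∪ G} v i|` for `G` finite disjoint from `F`,
whose `F`-indexed inf-sup being `0` defines `s = ∑_{i∈I} v i`. -/
def sumUB {I : Type*} (v : I → M) (s : M) (F : Finset I) : Set (L0 μ) :=
  {g | ∃ G : Finset I, Disjoint G F ∧ g = pn μ (s - (∑ i ∈ F, v i + ∑ i ∈ G, v i))}

/-- `HasSumMod μ v s` means that the family `{v_i}` is summable in the Banach `L⁰(𝕏)`-module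
with sum `s`, i.e. `⋀_F ⋁_G |s - ∑_{i ∈ F ∪ G} v_i| = 0` (the inner suprema being the values
of `b`, and the outer infimum being `0`). -/
def HasSumMod {I : Type*} (v : I → M) (s : M) : Prop :=
  ∃ b : Finset I → L0 μ, (∀ F, IsLUB (sumUB μ v s F) (b F)) ∧ IsGLB (Set.range b) 0

/-- A family in a Banach `L⁰(𝕏)`-module is summable if it has a sum. -/
def SummableMod {I : Type*} (v : I → M) : Prop :=
  ∃ s, HasSumMod μ v s

/-- The partial sums `∑_{i ∈ F} |v i|` of the pointwise norms of a family; the element `|v|₁`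
of `ℓ₁(I, ℳ)` is the supremum of this set. -/
def l1PartialSums {I : Type*} (v : I → M) : Set (L0 μ) :=
  {g | ∃ F : Finset I, g = ∑ i ∈ F, pn μ (v i)}

/-- Membership in `ℓ₁(I, ℳ)`: the partial sums of the pointwise norms admit a supremum
(equivalently, an upper bound) in `L⁰(𝕏)`. -/
def Meml1 {I : Type*} (v : I → M) : Prop :=
  ∃ b, IsLUB (l1PartialSums μ v) b

/-- The partial sums `∑_{i ∈ F} |v i|` for an `L⁰(𝕏)`-valued family. -/
def l1PartialSumsF {I : Type*} (v : I → L0 μ) : Set (L0 μ) :=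
  {g | ∃ F : Finset I, g = ∑ i ∈ F, |v i|}

/-- Membership in `ℓ₁(I, L⁰(𝕏))`. -/
def Meml1F {I : Type*} (v : I → L0 μ) : Prop :=
  ∃ b, IsLUB (l1PartialSumsF μ v) b

/-- The set whose infimum defines the projective pointwise norm: all values
`∑_{i=1}^n |v_i||w_i|` over representations `α = ∑_{i=1}^n v_i ⊗ w_i`. -/
def piReps (α : M ⊗[L0 μ] N) : Set (L0 μ) :=
  {g | ∃ (n : ℕ) (v : Fin n → M) (w : Fin n → N),
    α = ∑ i, v i ⊗ₜ[L0 μ] w i ∧ g = ∑ i, pn μ (v i) * pn μ (w i)}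

/-- The set whose supremum defines the injective pointwise norm: all values
`|∑_{i=1}^n ω(v_i) η(w_i)|` over representations `α = ∑_{i=1}^n v_i ⊗ w_i` and elements
`ω ∈ 𝔻_{ℳ*}`, `η ∈ 𝔻_{𝒩*}`. -/
def epsReps (α : M ⊗[L0 μ] N) : Set (L0 μ) :=
  {g | ∃ (n : ℕ) (v : Fin n → M) (w : Fin n → N)
    (ω : M →ₗ[L0 μ] L0 μ) (η : N →ₗ[L0 μ] L0 μ), InDualDisc μ ω ∧ InDualDisc μ η ∧
    α = ∑ i, v i ⊗ₜ[L0 μ] w i ∧ g = |∑ i, ω (v i) * η (w i)|}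

/-- `IsPiTensor μ M N P e` states that the Banach `L⁰(𝕏)`-module `P`, together with the
`L⁰(𝕏)`-linear map `e` defined on the algebraic tensor product, realizes the projective
tensor product `ℳ ⊗̂_π 𝒩`: the pointwise norm of `e α` is the projective pointwise norm
`|α|_π` and the image of `e` is dense. -/
structure IsPiTensor (M N P : Type*) [AddCommGroup M] [Module (L0 μ) M] [BanachMod μ M]
    [AddCommGroup N] [Module (L0 μ) N] [BanachMod μ N]
    [AddCommGroup P] [Module (L0 μ) P] [BanachMod μ P]
    (e : M ⊗[L0 μ] N →ₗ[L0 μ] P) : Prop where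
  pn_emb : ∀ α : M ⊗[L0 μ] N, IsGLB (piReps μ α) (pn μ (e α))
  dense : ∀ p : P, ∀ ε : ℝ, 0 < ε → ∃ α : M ⊗[L0 μ] N, dM μ (e α) p < ε

/-- `IsEpsTensor μ M N P e` states that the Banach `L⁰(𝕏)`-module `P`, together with the
`L⁰(𝕏)`-linear map `e` defined on the algebraic tensor product, realizes the injective
tensor product `ℳ ⊗̂_ε 𝒩`: the pointwise norm of `e α` is the injective pointwise norm
`|α|_ε` and the image of `e` is dense. -/
structure IsEpsTensor (M N P : Type*) [AddCommGroup M] [Module (L0 μ) M] [BanachMod μ M]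
    [AddCommGroup N] [Module (L0 μ) N] [BanachMod μ N]
    [AddCommGroup P] [Module (L0 μ) P] [BanachMod μ P]
    (e : M ⊗[L0 μ] N →ₗ[L0 μ] P) : Prop where
  pn_emb : ∀ α : M ⊗[L0 μ] N, IsLUB (epsReps μ α) (pn μ (e α))
  dense : ∀ p : P, ∀ ε : ℝ, 0 < ε → ∃ α : M ⊗[L0 μ] N, dM μ (e α) p < ε

end Defs

section OrderCompleteness

variable {P L : Type*} [SemilatticeInf P]
  [ConditionallyCompleteLinearOrder L] [TopologicalSpace L] [OrderTopology L]
  [FirstCountableTopology L]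

-- Among the infima of countable subsets of `S`, one minimizes `φ`; no `s ∈ S` can lower it further.
lemma exists_isGLB_of_strictMono {φ : P → L} (hφ : StrictMono φ)
    (hP : ∀ C : Set P, C.Countable → C.Nonempty → BddBelow C → ∃ b, IsGLB C b)
    {S : Set P} (hne : S.Nonempty) (hbdd : BddBelow S) : ∃ b, IsGLB S b := by
  let T : Set P := {b | ∃ C ⊆ S, C.Countable ∧ C.Nonempty ∧ IsGLB C b}
  have hT_ne : T.Nonempty := by
    obtain ⟨s, hs⟩ := hne
    exact ⟨s, {s}, singleton_subset_iff.2 hs, countable_singleton s, singleton_nonempty s,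
      isGLB_singleton⟩
  have hT_bdd : BddBelow (φ '' T) := by
    obtain ⟨l, hl⟩ := hbdd
    refine ⟨φ l, ?_⟩
    rintro _ ⟨b, ⟨C, hCS, -, -, hb⟩, rfl⟩
    exact hφ.monotone (hb.2 (lowerBounds_mono_set hCS hl))
  obtain ⟨u, -, hu, huT⟩ := exists_seq_tendsto_sInf (hT_ne.image φ) hT_bdd
  choose b hbT hφb using huT
  choose C hCS hCc hCne hCb using hbT
  have hUS : ⋃ n, C n ⊆ S := iUnion_subset hCS
  have hUc : (⋃ n, C n).Countable := countable_iUnion hCc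
  obtain ⟨g, hg⟩ := hP _ hUc ((hCne 0).mono (subset_iUnion C 0)) (hbdd.mono hUS)
  have hg_min : ∀ t ∈ T, φ g ≤ φ t := fun t ht =>
    (ge_of_tendsto' hu fun n =>
      (hφ.monotone ((hCb n).mono hg (subset_iUnion C n))).trans_eq (hφb n)).trans
      (csInf_le hT_bdd (mem_image_of_mem φ ht))
  refine ⟨g, fun s hs => ?_, fun l hl => hg.2 (lowerBounds_mono_set hUS hl)⟩
  by_contra hgs
  have hsg : s ⊓ g ∈ T :=
    ⟨_, insert_subset hs hUS, hUc.insert s, insert_nonempty _ _, hg.insert s⟩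
  exact (hg_min _ hsg).not_gt (hφ (inf_lt_right.2 hgs))

end OrderCompleteness

lemma eq_zero_of_abs_nonpos {G : Type*} [AddGroup G] [Lattice G] [AddLeftMono G] {a : G}
    (h : |a| ≤ 0) : a = 0 :=
  le_antisymm ((le_abs_self a).trans h) (Left.neg_nonpos_iff.1 ((neg_le_abs a).trans h))

lemma le_of_mul_le_mul_of_one_sub_mul_le {R : Type*} [Ring R] [Preorder R] [IsOrderedAddMonoid R]
    {a b : R} (e : R) (h : e * a ≤ e * b) (h' : (1 - e) * a ≤ (1 - e) * b) : a ≤ b := by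
  simpa only [← add_mul, add_sub_cancel, one_mul] using add_le_add h h'

/-- A commutative f-ring that is von Neumann regular. For a lattice-ordered ring with `0 ≤ 1`,
being an f-ring amounts to multiplicativity of the absolute value. The spaces `L⁰` are the
motivating example. -/
class RegularFRing (R : Type*) [CommRing R] [Lattice R] : Prop extends IsOrderedRing R where
  abs_mul : ∀ a b : R, |a * b| = |a| * |b|
  exists_mul_mul_self : ∀ a : R, ∃ b, a * b * a = a

section Support

variable {R : Type*} [CommRing R] [Lattice R] [RegularFRing R]

lemma nonneg_of_isIdempotentElem {e : R} (he : IsIdempotentElem e) : 0 ≤ e := by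
  have habs : |e| * |e| = |e| := by rw [← RegularFRing.abs_mul, he]
  have hmul : |e| * (1 - e) = 0 := by
    refine eq_zero_of_abs_nonpos (le_of_eq ?_)
    rw [RegularFRing.abs_mul, abs_abs, ← RegularFRing.abs_mul, mul_sub, mul_one, he, sub_self,
      abs_zero]
  have hsub : |e| - e = 0 := by
    refine eq_zero_of_abs_nonpos (le_of_eq ?_)
    have h₁ : |e| - e = (|e| - e) * e := by linear_combination hmul + he.eq
    have h₂ : (|e| - e) * abs e = 0 := by linear_combination habs + hmul
    calc |(|e| - e)| = |(|e| - e) * e| := congrArg abs h₁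
      _ = |(|e| - e) * abs e| := by simp only [RegularFRing.abs_mul, abs_abs]
      _ = 0 := by rw [h₂, abs_zero]
  rw [← sub_eq_zero.1 hsub]
  exact abs_nonneg e

/-- A chosen quasi-inverse of `f`; in `L⁰`, it equals `1 / f` where `f ≠ 0` and is arbitrary
elsewhere. -/
def quasiInv (f : R) : R := (RegularFRing.exists_mul_mul_self f).choose

/-- The support idempotent of `f`; in `L⁰`, the indicator function of `{f ≠ 0}`. -/
def supp (f : R) : R := f * quasiInv f

lemma supp_mul_self (f : R) : supp f * f = f :=
  (RegularFRing.exists_mul_mul_self f).choose_spec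

lemma one_sub_supp_mul_self (f : R) : (1 - supp f) * f = 0 := by
  rw [sub_mul, one_mul, supp_mul_self, sub_self]

lemma isIdempotentElem_supp (f : R) : IsIdempotentElem (supp f) :=
  calc supp f * supp f = supp f * f * quasiInv f := (mul_assoc _ _ _).symm
    _ = supp f := by rw [supp_mul_self, supp]

lemma supp_nonneg (f : R) : 0 ≤ supp f :=
  nonneg_of_isIdempotentElem (isIdempotentElem_supp f)

lemma one_sub_supp_nonneg (f : R) : 0 ≤ 1 - supp f :=
  nonneg_of_isIdempotentElem (isIdempotentElem_supp f).one_sub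

lemma abs_mul_abs_quasiInv (f : R) : |f| * |quasiInv f| = supp f := by
  rw [← RegularFRing.abs_mul]
  exact abs_of_nonneg (supp_nonneg f)

lemma isGLB_const_mul {S : Set R} {a c : R} (hS : S.Nonempty) (ha : IsGLB S a) (hc : 0 ≤ c) :
    IsGLB ((c * ·) '' S) (c * a) := by
  constructor
  · rintro _ ⟨s, hs, rfl⟩
    exact mul_le_mul_of_nonneg_left (ha.1 hs) hc
  intro y hy
  have hyS : ∀ s ∈ S, y ≤ c * s := fun s hs => hy ⟨s, hs, rfl⟩
  set e := supp c
  set g := |quasiInv c|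
  have hcg : c * g = e := by
    simpa only [abs_of_nonneg hc] using abs_mul_abs_quasiInv c
  have hce : e * c = c := supp_mul_self c
  have he : e * e = e := isIdempotentElem_supp c
  have hlower : g * e * y + (1 - e) * a ≤ a := by
    refine ha.2 fun s hs => ?_
    calc g * e * y + (1 - e) * a ≤ g * e * (c * s) + (1 - e) * s :=
          add_le_add (mul_le_mul_of_nonneg_left (hyS s hs)
            (mul_nonneg (abs_nonneg _) (supp_nonneg c)))
            (mul_le_mul_of_nonneg_left (ha.1 hs) (one_sub_supp_nonneg c))
      _ = s := by linear_combination e * s * hcg + s * he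
  refine le_of_mul_le_mul_of_one_sub_mul_le e ?_ ?_
  · calc e * y = c * (g * e * y + (1 - e) * a) := by
          linear_combination -y * he - e * y * hcg + a * hce
      _ ≤ c * a := mul_le_mul_of_nonneg_left hlower hc
      _ = e * (c * a) := by rw [← mul_assoc, hce]
  · obtain ⟨s, hs⟩ := hS
    calc (1 - e) * y ≤ (1 - e) * (c * s) :=
          mul_le_mul_of_nonneg_left (hyS s hs) (one_sub_supp_nonneg c)
      _ = (1 - e) * (c * a) := by linear_combination (a - s) * hce

end Support

/-- A pointwise seminorm on an `R`-module: a pointwise norm that may vanish at nonzero vectors. -/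
structure IsPointwiseSeminorm {R M : Type*} [CommRing R] [Lattice R] [AddCommGroup M] [Module R M]
    (p : M → R) : Prop where
  nonneg : ∀ x, 0 ≤ p x
  add_le : ∀ x y, p (x + y) ≤ p x + p y
  smul : ∀ (f : R) (x : M), p (f • x) = |f| * p x

/-- A pointwise norm on an `R`-module. -/
structure IsPointwiseNorm {R M : Type*} [CommRing R] [Lattice R] [AddCommGroup M] [Module R M]
    (p : M → R) : Prop extends IsPointwiseSeminorm p where
  eq_zero : ∀ x, p x = 0 → x = 0

namespace IsPointwiseSeminorm

variable {R M : Type*} [CommRing R] [Lattice R] [AddCommGroup M] [Module R M] {p : M → R}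

lemma map_zero [IsOrderedRing R] (hp : IsPointwiseSeminorm p) : p 0 = 0 := by
  simpa only [zero_smul, abs_zero, zero_mul] using hp.smul 0 0

lemma map_neg [IsOrderedRing R] (hp : IsPointwiseSeminorm p) (x : M) : p (-x) = p x := by
  simpa only [neg_smul, one_smul, abs_neg, abs_of_nonneg (zero_le_one' R), one_mul]
    using hp.smul (-1) x

lemma map_sub_le [IsOrderedRing R] (hp : IsPointwiseSeminorm p) (x y : M) :
    p (x - y) ≤ p x + p y := by
  simpa only [sub_eq_add_neg, hp.map_neg] using hp.add_le x (-y)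

-- Homogeneity for `f` follows from the inequality applied to a quasi-inverse of `f`.
lemma of_smul_le [RegularFRing R] (nonneg : ∀ x, 0 ≤ p x)
    (add_le : ∀ x y, p (x + y) ≤ p x + p y) (smul_le : ∀ (f : R) (x : M), p (f • x) ≤ |f| * p x) :
    IsPointwiseSeminorm p where
  nonneg := nonneg
  add_le := add_le
  smul f x := by
    refine le_antisymm (smul_le f x) ?_
    have hx : x = quasiInv f • f • x + (1 - supp f) • x := by
      rw [smul_smul, mul_comm, ← supp, ← add_smul, add_sub_cancel, one_smul]
    have hf : |f| * |1 - supp f| = 0 := by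
      rw [← RegularFRing.abs_mul, mul_comm, one_sub_supp_mul_self, abs_zero]
    calc |f| * p x = |f| * p (quasiInv f • f • x + (1 - supp f) • x) := by rw [← hx]
      _ ≤ |f| * (|quasiInv f| * p (f • x) + |1 - supp f| * p x) :=
          mul_le_mul_of_nonneg_left ((add_le _ _).trans (add_le_add (smul_le _ _) (smul_le _ _)))
            (abs_nonneg f)
      _ = supp f * p (f • x) := by
          linear_combination p (f • x) * abs_mul_abs_quasiInv f + p x * hf
      _ ≤ p (f • x) := by
          linear_combination mul_nonneg (one_sub_supp_nonneg f) (nonneg (f • x))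

end IsPointwiseSeminorm

lemma IsPointwiseNorm.supp_smul_self {R M : Type*} [CommRing R] [Lattice R] [RegularFRing R]
    [AddCommGroup M] [Module R M] {p : M → R} (hp : IsPointwiseNorm p) (x : M) :
    supp (p x) • x = x := by
  have h : (1 - supp (p x)) • x = 0 := hp.eq_zero _ <| by
    rw [hp.smul, abs_of_nonneg (one_sub_supp_nonneg _), one_sub_supp_mul_self]
  rw [sub_smul, one_smul, sub_eq_zero] at h
  exact h.symm

section HahnBanach

/-- A partially defined functional dominated by `p`, encoded by its graph. The bound makes `G`
single-valued when `p` is a pointwise seminorm. -/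
def IsDominated {R M : Type*} [CommRing R] [Lattice R] [AddCommGroup M] [Module R M] (p : M → R)
    (G : Submodule R (M × R)) : Prop :=
  ∀ z ∈ G, |z.2| ≤ p z.1

namespace IsDominated

variable {R M : Type*} [CommRing R] [AddCommGroup M] [Module R M]

section Lattice

variable [Lattice R] {p : M → R} {G : Submodule R (M × R)}

lemma exists_le_maximal (hG : IsDominated p G) : ∃ G', G ≤ G' ∧ Maximal (IsDominated p) G' := by
  refine zorn_le_nonempty₀ {G | IsDominated p G} (fun c hc hchain G₀ hG₀ => ?_) G hG
  refine ⟨sSup c, fun z hz => ?_, fun _ => le_sSup⟩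
  obtain ⟨G₁, hG₁, hz₁⟩ := (Submodule.mem_sSup_of_directed ⟨G₀, hG₀⟩ hchain.directedOn).1 hz
  exact hc hG₁ z hz₁

lemma snd_unique [IsOrderedRing R] (hp : IsPointwiseSeminorm p) (hG : IsDominated p G) {x : M}
    {c d : R} (hc : (x, c) ∈ G) (hd : (x, d) ∈ G) : c = d := by
  have h : |c - d| ≤ p (x - x) := hG _ (G.sub_mem hc hd)
  rw [sub_self, hp.map_zero] at h
  exact sub_eq_zero.1 (eq_zero_of_abs_nonpos h)

lemma span_singleton [RegularFRing R] (hp : IsPointwiseSeminorm p) (v : M) :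
    IsDominated p (Submodule.span R {(v, p v)}) := by
  intro z hz
  obtain ⟨f, rfl⟩ := Submodule.mem_span_singleton.1 hz
  simp only [Prod.smul_mk, smul_eq_mul, RegularFRing.abs_mul, hp.smul,
    abs_of_nonneg (hp.nonneg v), le_refl]

lemma sup_span_singleton [RegularFRing R] (hp : IsPointwiseSeminorm p) (hG : IsDominated p G)
    {x : M} {c : R} (hc : ∀ z ∈ G, |z.2 + c| ≤ p (z.1 + x)) :
    IsDominated p (G ⊔ Submodule.span R {(x, c)}) := by
  intro y hy
  obtain ⟨z, hz, _, hw, rfl⟩ := Submodule.mem_sup.1 hy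
  obtain ⟨f, rfl⟩ := Submodule.mem_span_singleton.1 hw
  change |z.2 + f * c| ≤ p (z.1 + f • x)
  set g := quasiInv f
  set e := supp f with he
  have hfe : e * f = f := supp_mul_self f
  -- On the support of `f`, divide by `f`; off the support, the new vector is invisible.
  refine le_of_mul_le_mul_of_one_sub_mul_le e ?_ ?_
  · have h : |f| * |g * z.2 + c| ≤ |f| * p (g • z.1 + x) :=
      mul_le_mul_of_nonneg_left (hc _ (G.smul_mem g hz)) (abs_nonneg f)
    have hscalar : f * (g * z.2 + c) = e * (z.2 + f * c) := by
      rw [he, supp] at hfe ⊢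
      linear_combination -c * hfe
    have hvector : f • (g • z.1 + x) = e • (z.1 + f • x) := by
      rw [smul_add, smul_add, smul_smul, smul_smul, hfe, he, supp]
    rwa [← RegularFRing.abs_mul, ← hp.smul, hscalar, hvector, hp.smul, RegularFRing.abs_mul,
      abs_of_nonneg (supp_nonneg f)] at h
  · have h : |1 - e| * |z.2| ≤ |1 - e| * p z.1 :=
      mul_le_mul_of_nonneg_left (hG z hz) (abs_nonneg _)
    have hscalar : (1 - e) * z.2 = (1 - e) * (z.2 + f * c) := by linear_combination c * hfe
    have hvector : (1 - e) • z.1 = (1 - e) • (z.1 + f • x) := by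
      rw [smul_add, smul_smul, one_sub_supp_mul_self, zero_smul, add_zero]
    rwa [← RegularFRing.abs_mul, ← hp.smul, hscalar, hvector, hp.smul, RegularFRing.abs_mul,
      abs_of_nonneg (one_sub_supp_nonneg f)] at h

end Lattice

variable [ConditionallyCompleteLattice R] {p : M → R} {G : Submodule R (M × R)}

lemma exists_abs_add_le [IsOrderedRing R] (hp : IsPointwiseSeminorm p) (hG : IsDominated p G)
    (x : M) : ∃ c : R, ∀ z ∈ G, |z.2 + c| ≤ p (z.1 + x) := by
  have hbounds : ∀ z ∈ G, ∀ w ∈ G, -z.2 - p (z.1 + x) ≤ p (w.1 + x) - w.2 := by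
    intro z hz w hw
    have hsub : w.2 - z.2 ≤ p (w.1 - z.1) := (le_abs_self _).trans (hG _ (G.sub_mem hw hz))
    have hp_sub : p (w.1 - z.1) ≤ p (w.1 + x) + p (z.1 + x) := by
      simpa only [add_sub_add_right_eq_sub] using hp.map_sub_le (w.1 + x) (z.1 + x)
    linear_combination hsub + hp_sub
  have hG_ne : (G : Set (M × R)).Nonempty := ⟨0, G.zero_mem⟩
  obtain ⟨c, hlower, hupper⟩ := exists_between_of_forall_le
    (hG_ne.image fun z => -z.2 - p (z.1 + x)) (hG_ne.image fun w => p (w.1 + x) - w.2) <| by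
      rintro _ ⟨z, hz, rfl⟩ _ ⟨w, hw, rfl⟩
      exact hbounds z hz w hw
  refine ⟨c, fun z hz => abs_le'.2 ⟨?_, ?_⟩⟩
  · linear_combination hupper (mem_image_of_mem _ hz)
  · linear_combination hlower (mem_image_of_mem _ hz)

lemma exists_mem_of_maximal [RegularFRing R] (hp : IsPointwiseSeminorm p)
    (hG : Maximal (IsDominated p) G) (x : M) : ∃ c : R, (x, c) ∈ G := by
  obtain ⟨c, hc⟩ := exists_abs_add_le hp hG.prop x
  exact ⟨c, hG.2 (sup_span_singleton hp hG.prop hc) le_sup_left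
    (Submodule.mem_sup_right (Submodule.mem_span_singleton_self _))⟩

end IsDominated

theorem IsPointwiseSeminorm.exists_dual_eq {R M : Type*} [CommRing R]
    [ConditionallyCompleteLattice R] [RegularFRing R] [AddCommGroup M] [Module R M] {p : M → R}
    (hp : IsPointwiseSeminorm p) (v : M) :
    ∃ ω : Module.Dual R M, (∀ x, |ω x| ≤ p x) ∧ ω v = p v := by
  obtain ⟨G, hvG, hG⟩ := (IsDominated.span_singleton hp v).exists_le_maximal
  choose ω hω using IsDominated.exists_mem_of_maximal hp hG
  have hunique {x : M} {c d : R} : (x, c) ∈ G → (x, d) ∈ G → c = d := hG.prop.snd_unique hp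
  refine ⟨⟨⟨ω, fun x y => ?_⟩, fun f x => ?_⟩, fun x => hG.prop _ (hω x), ?_⟩
  · exact hunique (hω _) (G.add_mem (hω x) (hω y))
  · exact hunique (hω _) (G.smul_mem f (hω x))
  · exact hunique (hω v) (hvG (Submodule.mem_span_singleton_self _))

end HahnBanach

section BoundedDual

variable {R M : Type*} [CommRing R] [AddCommGroup M] [Module R M]

/-- The functionals `ω` on `M` with `|ω x| ≤ C * p x` for some constant `C ≥ 0`. -/
def boundedDual [Lattice R] [RegularFRing R] (p : M → R) : Submodule R (Module.Dual R M) where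
  carrier := {ω | ∃ C, 0 ≤ C ∧ ∀ x, |ω x| ≤ C * p x}
  zero_mem' := ⟨0, le_rfl, fun x => by simp⟩
  add_mem' := by
    rintro ω η ⟨C, hC, hω⟩ ⟨D, hD, hη⟩
    refine ⟨C + D, add_nonneg hC hD, fun x => ?_⟩
    rw [add_mul]
    exact (abs_add_le _ _).trans (add_le_add (hω x) (hη x))
  smul_mem' := by
    rintro f ω ⟨C, hC, hω⟩
    refine ⟨|f| * C, mul_nonneg (abs_nonneg f) hC, fun x => ?_⟩
    rw [LinearMap.smul_apply, smul_eq_mul, RegularFRing.abs_mul, mul_assoc]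
    exact mul_le_mul_of_nonneg_left (hω x) (abs_nonneg f)

/-- The finite-rank operators `x ↦ ∑ ω i x • u i` with functionals `ω i ∈ boundedDual p`. -/
def boundedFiniteRank [Lattice R] [RegularFRing R] (p : M → R) : Submodule R (M →ₗ[R] M) :=
  Submodule.span R {T | ∃ ω ∈ boundedDual p, ∃ u : M, T = ω.smulRight u}

lemma smulRight_mem_boundedFiniteRank [Lattice R] [RegularFRing R] {p : M → R}
    {ω : Module.Dual R M} (hω : ω ∈ boundedDual p) (u : M) :
    ω.smulRight u ∈ boundedFiniteRank p :=
  Submodule.subset_span ⟨ω, hω, u, rfl⟩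

lemma comp_mem_boundedDual [Lattice R] [RegularFRing R] {p : M → R} {T : M →ₗ[R] M}
    (hT : T ∈ boundedFiniteRank p) (ω : Module.Dual R M) : ω ∘ₗ T ∈ boundedDual p := by
  induction hT using Submodule.span_induction with
  | mem T hT =>
    obtain ⟨η, hη, u, rfl⟩ := hT
    have h : ω ∘ₗ η.smulRight u = ω u • η := by
      ext x
      simp [mul_comm]
    exact h ▸ (boundedDual p).smul_mem _ hη
  | zero => simp
  | add T T' _ _ hT hT' => exact LinearMap.comp_add T T' ω ▸ (boundedDual p).add_mem hT hT'
  | smul f T _ hT => exact LinearMap.comp_smul ω f T ▸ (boundedDual p).smul_mem f hT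

-- To enlarge the fixed set of `T` by `v`, correct `T` by a functional that vanishes on the vectors
-- fixed by `T` and takes the value `supp (p u)` at the defect `u = v - T v`.
theorem IsPointwiseNorm.exists_boundedFiniteRank_fixing [ConditionallyCompleteLattice R]
    [RegularFRing R] {p : M → R} (hp : IsPointwiseNorm p) {s : Set M} (hs : s.Finite) :
    ∃ T ∈ boundedFiniteRank p, ∀ x ∈ s, T x = x := by
  induction s, hs using Set.Finite.induction_on with
  | empty => exact ⟨0, Submodule.zero_mem _, fun _ h => h.elim⟩
  | @insert v s _ _ ih =>
    obtain ⟨T, hT, hTs⟩ := ih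
    set u := v - T v
    obtain ⟨ω₀, hω₀, hω₀u⟩ := hp.exists_dual_eq u
    have hω₀_mem : ω₀ ∈ boundedDual p := ⟨1, zero_le_one, by simpa only [one_mul] using hω₀⟩
    let ω : Module.Dual R M := quasiInv (p u) • (ω₀ - ω₀ ∘ₗ T)
    have hω (x : M) : ω x = quasiInv (p u) * ω₀ (x - T x) := by simp [ω]
    have hω_mem : ω ∈ boundedDual p :=
      Submodule.smul_mem _ _ (Submodule.sub_mem _ hω₀_mem (comp_mem_boundedDual hT ω₀))
    refine ⟨T + ω.smulRight u,
      Submodule.add_mem _ hT (smulRight_mem_boundedFiniteRank hω_mem u), ?_⟩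
    rintro x (rfl | hx)
    · have hωx : ω x = supp (p u) := by rw [hω, hω₀u, mul_comm, supp]
      simp [hωx, hp.supp_smul_self, u]
    · simp [hω, hTs x hx]

end BoundedDual

section Slice

variable {R M N : Type*} [CommRing R] [AddCommGroup M] [Module R M] [AddCommGroup N] [Module R N]

/-- The slice map `v ⊗ w ↦ ω v • w` of a functional `ω` on the first factor. -/
def slice (ω : Module.Dual R M) : M ⊗[R] N →ₗ[R] N :=
  (TensorProduct.lid R N).toLinearMap ∘ₗ ω.rTensor N

lemma slice_tmul (ω : Module.Dual R M) (v : M) (w : N) : slice ω (v ⊗ₜ[R] w) = ω v • w := by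
  simp [slice]

lemma rTensor_smulRight (ω : Module.Dual R M) (u : M) :
    (ω.smulRight u).rTensor N = TensorProduct.mk R M N u ∘ₗ slice ω := by
  ext v w
  simp [slice_tmul, TensorProduct.smul_tmul]

lemma rTensor_eq_zero_of_slice_eq_zero [Lattice R] [RegularFRing R] {p : M → R} {T : M →ₗ[R] M}
    (hT : T ∈ boundedFiniteRank p) {α : M ⊗[R] N} (hα : ∀ ω ∈ boundedDual p, slice ω α = 0) :
    T.rTensor N α = 0 := by
  induction hT using Submodule.span_induction with
  | mem T hT =>
    obtain ⟨ω, hω, u, rfl⟩ := hT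
    simp [rTensor_smulRight, hα ω hω]
  | zero => simp
  | add T T' _ _ hT hT' => rw [LinearMap.rTensor_add, LinearMap.add_apply, hT, hT', add_zero]
  | smul f T _ hT => rw [LinearMap.rTensor_smul, LinearMap.smul_apply, hT, smul_zero]

theorem IsPointwiseNorm.eq_zero_of_slice_eq_zero [ConditionallyCompleteLattice R] [RegularFRing R]
    {p : M → R} (hp : IsPointwiseNorm p) {α : M ⊗[R] N}
    (hα : ∀ ω ∈ boundedDual p, slice ω α = 0) : α = 0 := by
  obtain ⟨n, v, w, hvw⟩ := TensorProduct.exists_sum_tmul_eq α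
  obtain ⟨T, hT, hTv⟩ := hp.exists_boundedFiniteRank_fixing (finite_range v)
  have hTα : T.rTensor N α = α := by
    simp only [hvw, map_sum, LinearMap.rTensor_tmul, hTv _ (mem_range_self _)]
  rw [← hTα, rTensor_eq_zero_of_slice_eq_zero hT hα]

end Slice

section ProjNorm

variable {R M N : Type*} [CommRing R] [AddCommGroup M] [Module R M] [AddCommGroup N] [Module R N]

/-- The values `∑ p (v i) * q (w i)` over all representations `α = ∑ v i ⊗ w i`; the abstract
form of `piReps`. -/
def projReps (p : M → R) (q : N → R) (α : M ⊗[R] N) : Set R :=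
  {g | ∃ (n : ℕ) (v : Fin n → M) (w : Fin n → N),
    α = ∑ i, v i ⊗ₜ[R] w i ∧ g = ∑ i, p (v i) * q (w i)}

/-- The projective pointwise norm `|α|_π` associated with `p` and `q`. -/
def projNorm [ConditionallyCompleteLattice R] (p : M → R) (q : N → R) (α : M ⊗[R] N) : R :=
  sInf (projReps p q α)

lemma projReps_nonempty (p : M → R) (q : N → R) (α : M ⊗[R] N) : (projReps p q α).Nonempty :=
  let ⟨n, v, w, h⟩ := TensorProduct.exists_sum_tmul_eq α
  ⟨_, n, v, w, h, rfl⟩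

lemma mul_mem_projReps_tmul (p : M → R) (q : N → R) (v : M) (w : N) :
    p v * q w ∈ projReps p q (v ⊗ₜ[R] w) :=
  ⟨1, fun _ => v, fun _ => w, by simp, by simp⟩

open Pointwise in
lemma projReps_add_subset (p : M → R) (q : N → R) (α β : M ⊗[R] N) :
    projReps p q α + projReps p q β ⊆ projReps p q (α + β) := by
  rintro _ ⟨_, ⟨m, v, w, rfl, rfl⟩, _, ⟨n, v', w', rfl, rfl⟩, rfl⟩
  exact ⟨m + n, Fin.append v v', Fin.append w w', by simp [Fin.sum_univ_add],
    by simp [Fin.sum_univ_add]⟩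

lemma image_mul_projReps_subset [Lattice R] {p : M → R} (hp : IsPointwiseSeminorm p) (q : N → R)
    (f : R) (α : M ⊗[R] N) : (|f| * ·) '' projReps p q α ⊆ projReps p q (f • α) := by
  rintro _ ⟨_, ⟨n, v, w, rfl, rfl⟩, rfl⟩
  refine ⟨n, fun i => f • v i, w, ?_, ?_⟩
  · simp only [Finset.smul_sum, TensorProduct.smul_tmul']
  · simp only [hp.smul, Finset.mul_sum, mul_assoc]

lemma nonneg_of_mem_projReps [Lattice R] [IsOrderedRing R] {p : M → R} {q : N → R}
    (hp : IsPointwiseSeminorm p) (hq : IsPointwiseSeminorm q) {α : M ⊗[R] N} {a : R}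
    (ha : a ∈ projReps p q α) : 0 ≤ a := by
  obtain ⟨n, v, w, -, rfl⟩ := ha
  exact Finset.sum_nonneg fun i _ => mul_nonneg (hp.nonneg _) (hq.nonneg _)

lemma apply_slice_le_of_mem_projReps [Lattice R] [IsOrderedRing R] {p : M → R} {q : N → R}
    (hq : IsPointwiseSeminorm q) {ω : Module.Dual R M} {C : R} (hω : ∀ x, |ω x| ≤ C * p x)
    {α : M ⊗[R] N} {a : R} (ha : a ∈ projReps p q α) : q (slice ω α) ≤ C * a := by
  obtain ⟨n, v, w, rfl, rfl⟩ := ha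
  rw [map_sum, Finset.mul_sum]
  refine (Finset.le_sum_of_subadditive q hq.map_zero.le hq.add_le _ _).trans
    (Finset.sum_le_sum fun i _ => ?_)
  rw [slice_tmul, hq.smul, ← mul_assoc]
  exact mul_le_mul_of_nonneg_right (hω _) (hq.nonneg _)

variable [ConditionallyCompleteLattice R]

lemma isGLB_projNorm [IsOrderedRing R] {p : M → R} {q : N → R} (hp : IsPointwiseSeminorm p)
    (hq : IsPointwiseSeminorm q) (α : M ⊗[R] N) : IsGLB (projReps p q α) (projNorm p q α) :=
  isGLB_csInf (projReps_nonempty p q α) ⟨0, fun _ => nonneg_of_mem_projReps hp hq⟩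

variable [RegularFRing R] {p : M → R} {q : N → R}

lemma isPointwiseSeminorm_projNorm (hp : IsPointwiseSeminorm p) (hq : IsPointwiseSeminorm q) :
    IsPointwiseSeminorm (projNorm p q) :=
  .of_smul_le
    (fun α => (isGLB_projNorm hp hq α).2 fun _ => nonneg_of_mem_projReps hp hq)
    (fun α β => ((isGLB_projNorm hp hq α).add (isGLB_projNorm hp hq β)).mono
      (isGLB_projNorm hp hq _) (projReps_add_subset p q α β))
    (fun f α => (isGLB_const_mul (projReps_nonempty p q α) (isGLB_projNorm hp hq α)
      (abs_nonneg f)).mono (isGLB_projNorm hp hq _) (image_mul_projReps_subset hp q f α))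

lemma apply_slice_le_mul_projNorm (hp : IsPointwiseSeminorm p) (hq : IsPointwiseSeminorm q)
    {ω : Module.Dual R M} {C : R} (hC : 0 ≤ C) (hω : ∀ x, |ω x| ≤ C * p x) (α : M ⊗[R] N) :
    q (slice ω α) ≤ C * projNorm p q α := by
  refine (isGLB_const_mul (projReps_nonempty p q α) (isGLB_projNorm hp hq α) hC).2 ?_
  rintro _ ⟨a, ha, rfl⟩
  exact apply_slice_le_of_mem_projReps hq hω ha

theorem isPointwiseNorm_projNorm (hp : IsPointwiseNorm p) (hq : IsPointwiseNorm q) :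
    IsPointwiseNorm (projNorm p q : M ⊗[R] N → R) where
  toIsPointwiseSeminorm :=
    isPointwiseSeminorm_projNorm hp.toIsPointwiseSeminorm hq.toIsPointwiseSeminorm
  eq_zero α hα := hp.eq_zero_of_slice_eq_zero <| by
    rintro ω ⟨C, hC, hω⟩
    have h := apply_slice_le_mul_projNorm hp.toIsPointwiseSeminorm hq.toIsPointwiseSeminorm hC hω α
    rw [hα, mul_zero] at h
    exact hq.eq_zero _ (le_antisymm h (hq.nonneg _))

theorem projNorm_tmul (hp : IsPointwiseSeminorm p) (hq : IsPointwiseSeminorm q) (v : M) (w : N) :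
    projNorm p q (v ⊗ₜ[R] w) = p v * q w := by
  refine le_antisymm ((isGLB_projNorm hp hq _).1 (mul_mem_projReps_tmul p q v w)) ?_
  obtain ⟨ω, hω, hωv⟩ := hp.exists_dual_eq v
  calc p v * q w = q (slice ω (v ⊗ₜ[R] w)) := by
        rw [slice_tmul, hq.smul, hωv, abs_of_nonneg (hp.nonneg v)]
    _ ≤ 1 * projNorm p q (v ⊗ₜ[R] w) :=
        apply_slice_le_mul_projNorm hp hq zero_le_one (by simpa only [one_mul] using hω) _
    _ = projNorm p q (v ⊗ₜ[R] w) := one_mul _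

end ProjNorm

theorem projective_pointwise_norm_general
    {R : Type*} [CommRing R] [ConditionallyCompleteLattice R] [RegularFRing R]
    {M : Type*} [AddCommGroup M] [Module R M] {N : Type*} [AddCommGroup N] [Module R N]
    {p : M → R} (hp : IsPointwiseNorm p) {q : N → R} (hq : IsPointwiseNorm q) :
    (∀ α : M ⊗[R] N, ∃ b, IsGLB (projReps p q α) b)
    ∧ (∀ (α : M ⊗[R] N) (b : R), IsGLB (projReps p q α) b → 0 ≤ b)
    ∧ (∀ (α : M ⊗[R] N) (b : R), IsGLB (projReps p q α) b → (b = 0 ↔ α = 0))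
    ∧ (∀ (α β : M ⊗[R] N) (a b c : R), IsGLB (projReps p q α) a → IsGLB (projReps p q β) b →
        IsGLB (projReps p q (α + β)) c → c ≤ a + b)
    ∧ (∀ (f : R) (α : M ⊗[R] N) (a c : R), IsGLB (projReps p q α) a →
        IsGLB (projReps p q (f • α)) c → c = |f| * a)
    ∧ (∀ (v : M) (w : N) (b : R), IsGLB (projReps p q (v ⊗ₜ[R] w)) b → b = p v * q w) := by
  have hpq := isPointwiseNorm_projNorm hp hq
  have hglb := isGLB_projNorm hp.toIsPointwiseSeminorm hq.toIsPointwiseSeminorm (R := R)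
  have heq {α : M ⊗[R] N} {b : R} (hb : IsGLB (projReps p q α) b) : b = projNorm p q α :=
    hb.unique (hglb α)
  refine ⟨fun α => ⟨_, hglb α⟩, fun α b hb => ?_, fun α b hb => ?_,
    fun α β a b c ha hb hc => ?_, fun f α a c ha hc => ?_, fun v w b hb => ?_⟩
  · exact heq hb ▸ hpq.nonneg α
  · exact heq hb ▸ ⟨hpq.eq_zero α, fun hα => hα ▸ hpq.map_zero⟩
  · exact heq ha ▸ heq hb ▸ heq hc ▸ hpq.add_le α β
  · exact heq ha ▸ heq hc ▸ hpq.smul f α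
  · exact heq hb ▸ projNorm_tmul hp.toIsPointwiseSeminorm hq.toIsPointwiseSeminorm v w

namespace L0

variable (μ : Measure X)

instance isOrderedRing : IsOrderedRing (L0 μ) :=
  Function.Injective.isOrderedRing AEEqFun.toGerm AEEqFun.zero_toGerm AEEqFun.one_toGerm
    AEEqFun.add_toGerm AEEqFun.mul_toGerm Iff.rfl

instance regularFRing : RegularFRing (L0 μ) where
  abs_mul f g := by
    refine AEEqFun.ext ?_
    filter_upwards [AEEqFun.coeFn_abs (f * g), AEEqFun.coeFn_mul f g, AEEqFun.coeFn_mul |f| |g|,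
      AEEqFun.coeFn_abs f, AEEqFun.coeFn_abs g] with x habs_fg hfg habs_mul hf hg
    rw [habs_fg, hfg, habs_mul, Pi.mul_apply, Pi.mul_apply, hf, hg, abs_mul]
  exists_mul_mul_self f := by
    refine ⟨AEEqFun.compMeasurable Inv.inv measurable_inv f, AEEqFun.toGerm_injective ?_⟩
    rw [AEEqFun.mul_toGerm, AEEqFun.mul_toGerm, AEEqFun.compMeasurable_toGerm]
    exact f.toGerm.inductionOn fun f' =>
      congrArg Germ.ofFun (funext fun x => mul_inv_mul_cancel (f' x))

variable {μ}

lemma exists_isGLB_of_countable {C : Set (L0 μ)} (hC : C.Countable) (hne : C.Nonempty)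
    (hbdd : BddBelow C) : ∃ g, IsGLB C g := by
  obtain ⟨u, rfl⟩ := hC.exists_eq_range hne
  obtain ⟨l, hl⟩ := hbdd
  have hlu : ∀ᵐ x ∂μ, ∀ n, l x ≤ u n x :=
    ae_all_iff.2 fun n => AEEqFun.coeFn_le.2 (hl (mem_range_self n))
  have hmeas : AEStronglyMeasurable (fun x => ⨅ n, u n x) μ :=
    (AEMeasurable.iInf fun n => (u n).aemeasurable).aestronglyMeasurable
  refine ⟨AEEqFun.mk _ hmeas, ?_, fun c hc => ?_⟩
  · rintro _ ⟨n, rfl⟩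
    rw [← AEEqFun.coeFn_le]
    filter_upwards [AEEqFun.coeFn_mk _ hmeas, hlu] with x hx hlx
    exact hx.trans_le (ciInf_le ⟨l x, forall_mem_range.2 hlx⟩ n)
  · have hcu : ∀ᵐ x ∂μ, ∀ n, c x ≤ u n x :=
      ae_all_iff.2 fun n => AEEqFun.coeFn_le.2 (hc (mem_range_self n))
    rw [← AEEqFun.coeFn_le]
    filter_upwards [AEEqFun.coeFn_mk _ hmeas, hcu] with x hx hcx
    exact (le_ciInf hcx).trans_eq hx.symm

variable [SFinite μ]

lemma integrable_arctan (f : L0 μ) : Integrable (fun x => Real.arctan (f x)) μ.toFinite := by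
  refine Integrable.of_bound (C := Real.pi / 2) ?_ (ae_of_all _ fun x => ?_)
  · exact (Real.continuous_arctan.comp_aestronglyMeasurable f.aestronglyMeasurable).mono_ac
      (toFinite_absolutelyContinuous μ)
  · exact abs_le.2 ⟨(Real.neg_pi_div_two_lt_arctan _).le, (Real.arctan_lt_pi_div_two _).le⟩

lemma strictMono_integral_arctan :
    StrictMono fun f : L0 μ => ∫ x, Real.arctan (f x) ∂μ.toFinite := by
  intro f g hfg
  have hle : (fun x => Real.arctan (f x)) ≤ᵐ[μ.toFinite] fun x => Real.arctan (g x) := by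
    rw [EventuallyLE, ae_toFinite]
    filter_upwards [AEEqFun.coeFn_le.2 hfg.le] with x hx using Real.arctan_mono hx
  refine lt_of_le_of_ne
    (integral_mono_ae (integrable_arctan f) (integrable_arctan g) hle) fun heq => hfg.ne ?_
  have hae := (integral_eq_iff_of_ae_le (integrable_arctan f) (integrable_arctan g) hle).1 heq
  rw [EventuallyEq, ae_toFinite] at hae
  exact AEEqFun.ext (hae.mono fun x hx => Real.arctan_injective hx)

lemma exists_isGLB {S : Set (L0 μ)} (hne : S.Nonempty) (hbdd : BddBelow S) : ∃ g, IsGLB S g :=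
  exists_isGLB_of_strictMono strictMono_integral_arctan (fun _ => exists_isGLB_of_countable)
    hne hbdd

open Classical in
/-- Dedekind completeness of `L⁰`. The infimum of a set that is empty or unbounded below is the junk
value `0`. -/
instance conditionallyCompleteLattice : ConditionallyCompleteLattice (L0 μ) :=
  let _ : InfSet (L0 μ) :=
    ⟨fun S => if h : S.Nonempty ∧ BddBelow S then (exists_isGLB h.1 h.2).choose else 0⟩
  { (inferInstance : Lattice (L0 μ)),
    conditionallyCompleteLatticeOfsInf (L0 μ)
      (fun f g => ⟨f ⊔ g, by simp [upperBounds]⟩) (fun f g => ⟨f ⊓ g, by simp [lowerBounds]⟩)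
      (fun S hbdd hne => by
        change IsGLB S (dite _ _ _)
        rw [dif_pos ⟨hne, hbdd⟩]
        exact (exists_isGLB hne hbdd).choose_spec) with }

end L0

lemma isPointwiseNorm_pn (μ : Measure X) [SFinite μ] (M : Type*) [AddCommGroup M]
    [Module (L0 μ) M] [BanachMod μ M] : IsPointwiseNorm (pn μ : M → L0 μ) where
  nonneg := BanachMod.pn_nonneg
  add_le := BanachMod.pn_add_le
  smul := BanachMod.pn_smul
  eq_zero v := (BanachMod.pn_eq_zero v).1

/-- Let `𝕏` be a σ-finite measure space and `ℳ`, `𝒩` Banach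
`L⁰(𝕏)`-modules. The projective pointwise norm `|α|_π := ⋀ { ∑_{i=1}^n |v_i||w_i| :
α = ∑_{i=1}^n v_i ⊗ w_i }` (the infimum over all representations, which exists) is a
pointwise norm on `ℳ ⊗ 𝒩`, and `|v ⊗ w|_π = |v||w|`. -/
theorem projective_pointwise_norm
    (μ : Measure X) [SigmaFinite μ]
    (M : Type*) [AddCommGroup M] [Module (L0 μ) M] [BanachMod μ M]
    (N : Type*) [AddCommGroup N] [Module (L0 μ) N] [BanachMod μ N]
    :
    -- existence of the infimum
    (∀ α : M ⊗[L0 μ] N, ∃ b : L0 μ, IsGLB (piReps μ α) b)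
    -- nonnegativity
    ∧ (∀ (α : M ⊗[L0 μ] N) (b : L0 μ), IsGLB (piReps μ α) b → 0 ≤ b)
    -- `|α|_π = 0` iff `α = 0`
    ∧ (∀ (α : M ⊗[L0 μ] N) (b : L0 μ), IsGLB (piReps μ α) b → (b = 0 ↔ α = 0))
    -- subadditivity
    ∧ (∀ (α β : M ⊗[L0 μ] N) (a b c : L0 μ), IsGLB (piReps μ α) a → IsGLB (piReps μ β) b →
        IsGLB (piReps μ (α + β)) c → c ≤ a + b)
    -- homogeneity
    ∧ (∀ (f : L0 μ) (α : M ⊗[L0 μ] N) (a c : L0 μ), IsGLB (piReps μ α) a →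
        IsGLB (piReps μ (f • α)) c → c = |f| * a)
    -- value on elementary tensors
    ∧ (∀ (v : M) (w : N) (b : L0 μ), IsGLB (piReps μ (v ⊗ₜ[L0 μ] w)) b →
        b = pn μ v * pn μ w) :=
  projective_pointwise_norm_general (isPointwiseNorm_pn μ M) (isPointwiseNorm_pn μ N)

end Paper
end
end

section
/- Let 𝕏 be a σ-finite measure space and T : ℳ → ℳ̃, S : 𝒩 → 𝒩̃ homomorphisms of Banach L^0(𝕏)-modules. Then there exists a unique homomorphism of Banach L^0(𝕏)-modules T ⊗_π S : ℳ ⊗̂_π 𝒩 → ℳ̃ ⊗̂_π 𝒩̃ such that (T ⊗_π S)(v ⊗ w) = T(v) ⊗ S(w) for every v ∈ ℳ and w ∈ 𝒩; moreover its pointwise norm satisfies |T ⊗_π S| = |T||S|. -/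
open MeasureTheory Filter Set TensorProduct

noncomputable section

namespace Paper

variable {X : Type*} [MeasurableSpace X]

/-!
Bounds `g` of `T` and `h` of `S` give `|(T ⊗ S) α|_π ≤ g h |α|_π` on the algebraic tensor product,
term by term over the representations of `α`. Hence `T ⊗ S` extends uniquely by density, and taking
infima over `g` and `h` gives `|T ⊗_π S| ≤ |T| |S|`. Conversely, a bound `u` of the extension
satisfies `|T v| |S w| ≤ u |v| |w|` because the projective norm is a cross norm,
`|v ⊗ w|_π = |v| |w|`, and such an inequality can be divided by `|v|` and `|w|` where they do not
vanish.

The cross norm identity needs a functional `ω` with `|ω| ≤ 1` and `ω v = |v|`, that is, a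
Hahn–Banach theorem for modules over `L⁰(𝕏)`: a sublinear map dominates a minimal sublinear map,
and minimal sublinear maps are linear. This uses the Dedekind completeness of `L⁰(𝕏)`, where an
infimum of functions is the density of the infimum of the corresponding measures. Since `L⁰(𝕏)` is
not a field, quasi-inverses take the place of inverses in the classical arguments.
-/
/-! ### Infima in ordered von Neumann regular rings -/

section OrderedRegular

/-- An ordered commutative ring in which every `f ≥ 0` has a quasi-inverse `j ≥ 0` for which the
idempotent `f * j` is at most `1`. This is von Neumann regularity compatible with the order; it
replaces division in `L⁰(𝕏)`, where `j` is `1 / f` on `{f ≠ 0}` and `0` elsewhere. -/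
class IsOrderedRegular (R : Type*) [CommRing R] [PartialOrder R] : Prop where
  exists_quasiInv : ∀ f : R, 0 ≤ f → ∃ j, 0 ≤ j ∧ f * j * f = f ∧ f * j ≤ 1

variable {R : Type*} [CommRing R]

lemma one_sub_mul_quasiInv_mul {f j : R} (h : f * j * f = f) : (1 - f * j) * f = 0 := by
  rw [sub_mul, one_mul, h, sub_self]

variable [PartialOrder R] [IsOrderedRing R]

lemma le_of_mul_quasiInv_le {f j x y : R} (hf : 0 ≤ f) (hsupp : j * x ≤ j * y)
    (hcompl : (1 - f * j) * x ≤ (1 - f * j) * y) : x ≤ y :=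
  calc x = f * (j * x) + (1 - f * j) * x := by ring
    _ ≤ f * (j * y) + (1 - f * j) * y := by gcongr
    _ = y := by ring

lemma le_mul_of_isGLB [IsOrderedRegular R] {s : Set R} {a b f : R} (ha : IsGLB s a)
    (hs : s.Nonempty) (hf : 0 ≤ f) (h : ∀ g ∈ s, b ≤ f * g) : b ≤ f * a := by
  obtain ⟨j, hj, hfjf, hfj⟩ := IsOrderedRegular.exists_quasiInv f hf
  have : 0 ≤ 1 - f * j := sub_nonneg.2 hfj
  have hker := one_sub_mul_quasiInv_mul hfjf
  refine le_of_mul_quasiInv_le (j := j) hf ?_ ?_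
  · have key : j * b + (1 - f * j) * a ≤ a := ha.2 fun g hg =>
      calc j * b + (1 - f * j) * a ≤ j * (f * g) + (1 - f * j) * g := by
            gcongr
            · exact h g hg
            · exact ha.1 hg
        _ = g := by ring
    linear_combination key
  · obtain ⟨g, hg⟩ := hs
    calc (1 - f * j) * b ≤ (1 - f * j) * (f * g) := by gcongr; exact h g hg
      _ = (1 - f * j) * (f * a) := by rw [← mul_assoc, hker, zero_mul, ← mul_assoc, hker, zero_mul]

lemma le_mul_of_isGLB_of_isGLB [IsOrderedRegular R] {s t : Set R} {a b c : R} (ha : IsGLB s a)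
    (hb : IsGLB t b) (hs : s.Nonempty) (ht : t.Nonempty) (hs₀ : ∀ g ∈ s, 0 ≤ g)
    (ht₀ : ∀ h ∈ t, 0 ≤ h) (hc : ∀ g ∈ s, ∀ h ∈ t, c ≤ g * h) : c ≤ a * b := by
  rw [mul_comm]
  refine le_mul_of_isGLB ha hs (hb.2 ht₀) fun g hg => ?_
  rw [mul_comm]
  exact le_mul_of_isGLB hb ht (hs₀ g hg) (hc g hg)

end OrderedRegular

/-! ### Sublinear maps and the Hahn–Banach theorem -/

section HahnBanach

variable {R M : Type*} [CommRing R] [AddCommGroup M] [Module R M]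

/-- Sublinear maps with values in an ordered ring. Positive homogeneity is only required as an
inequality; over an `IsOrderedRegular` ring equality follows, see
`IsSublinear.map_smul_of_nonneg`. -/
structure IsSublinear [PartialOrder R] (p : M → R) : Prop where
  add_le : ∀ u w, p (u + w) ≤ p u + p w
  smul_le : ∀ f : R, 0 ≤ f → ∀ u, p (f • u) ≤ f * p u

namespace IsSublinear

section PartialOrder

variable [PartialOrder R] [IsOrderedRing R] {p : M → R}

lemma map_zero (hp : IsSublinear p) : p 0 = 0 := by
  refine le_antisymm ?_ ?_
  · simpa using hp.smul_le 0 le_rfl 0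
  · simpa using hp.add_le 0 0

lemma neg_map_neg_le (hp : IsSublinear p) (u : M) : -p (-u) ≤ p u := by
  have := hp.add_le u (-u)
  rw [add_neg_cancel, hp.map_zero] at this
  exact neg_le_iff_add_nonneg.2 this

lemma map_smul_of_nonneg [IsOrderedRegular R] (hp : IsSublinear p) {f : R} (hf : 0 ≤ f) (u : M) :
    p (f • u) = f * p u := by
  obtain ⟨j, hj, hfjf, hfj⟩ := IsOrderedRegular.exists_quasiInv f hf
  have hfj' : 0 ≤ 1 - f * j := sub_nonneg.2 hfj
  have hker := one_sub_mul_quasiInv_mul hfjf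
  refine le_antisymm (hp.smul_le f hf u) (le_of_mul_quasiInv_le (j := j) hf ?_ ?_)
  · have hsplit : p u ≤ j * p (f • u) + (1 - f * j) * p u :=
      calc p u = p (j • f • u + (1 - f * j) • u) := by
            rw [smul_smul, ← add_smul, mul_comm j, add_sub_cancel, one_smul]
        _ ≤ p (j • f • u) + p ((1 - f * j) • u) := hp.add_le _ _
        _ ≤ j * p (f • u) + (1 - f * j) * p u :=
            add_le_add (hp.smul_le _ hj _) (hp.smul_le _ hfj' _)
    linear_combination hsplit
  · calc (1 - f * j) * (f * p u) = p ((1 - f * j) • f • u) := by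
          rw [← mul_assoc, smul_smul, hker, zero_mul, zero_smul, hp.map_zero]
      _ ≤ (1 - f * j) * p (f • u) := hp.smul_le _ hfj' _

end PartialOrder

variable [ConditionallyCompleteLattice R] [IsOrderedRing R] [IsOrderedRegular R] {p : M → R}

lemma iInf_of_directed {ι : Type*} [Nonempty ι] {q : ι → M → R} (hq : ∀ i, IsSublinear (q i))
    (hdir : Directed (· ≥ ·) q) (hbdd : ∀ u, BddBelow (range fun i => q i u)) :
    IsSublinear fun u => ⨅ i, q i u where
  add_le u w := by
    refine le_ciInf_add_ciInf fun i k => ?_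
    obtain ⟨l, hli, hlk⟩ := hdir i k
    calc ⨅ i, q i (u + w) ≤ q l (u + w) := ciInf_le (hbdd _) l
      _ ≤ q l u + q l w := (hq l).add_le u w
      _ ≤ q i u + q k w := add_le_add (hli u) (hlk w)
  smul_le f hf u := by
    refine le_mul_of_isGLB (isGLB_ciInf (hbdd u)) (range_nonempty _) hf ?_
    rintro _ ⟨i, rfl⟩
    exact (ciInf_le (hbdd _) i).trans ((hq i).smul_le f hf u)

lemma exists_minimal_le (hp : IsSublinear p) :
    ∃ m ≤ p, Minimal IsSublinear m := by
  refine zorn_le_nonempty₀ (α := (M → R)ᵒᵈ) {q | IsSublinear (OrderDual.ofDual q)}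
    (fun c hc hchain q₀ hq₀ => ?_) (OrderDual.toDual p) hp
  have : Nonempty c := ⟨⟨q₀, hq₀⟩⟩
  let q : c → M → R := fun r => OrderDual.ofDual r.1
  have hq : ∀ r, IsSublinear (q r) := fun r => hc r.2
  have hdir : Directed (· ≥ ·) q := directedOn_iff_directed.1 hchain.directedOn
  have hbdd : ∀ u, BddBelow (range fun r => q r u) := by
    refine fun u => ⟨-q ⟨q₀, hq₀⟩ (-u), ?_⟩
    rintro _ ⟨r, rfl⟩
    obtain ⟨l, hlr, hl₀⟩ := hdir r ⟨q₀, hq₀⟩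
    exact (neg_le_neg (hl₀ (-u))).trans (((hq l).neg_map_neg_le u).trans (hlr u))
  exact ⟨OrderDual.toDual fun u => ⨅ r, q r u, iInf_of_directed hq hdir hbdd,
    fun r hr u => ciInf_le (hbdd u) ⟨r, hr⟩⟩

end IsSublinear

/-- For a sublinear `p`, the one-sided derivative of `p` at `x` in the direction `u`, written as an
infimum: over the reals, `p (u + f • x) - f * p x` is the difference quotient of `p` with step
`1 / f`. Replacing `p` by this smaller sublinear map is the basic move of the Hahn–Banach
theorem. -/
def directionalInf [ConditionallyCompleteLattice R] (p : M → R) (x u : M) : R :=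
  ⨅ f : {f : R // 0 ≤ f}, (p (u + f.1 • x) - f.1 * p x)

namespace IsSublinear

variable [ConditionallyCompleteLattice R] [IsOrderedRing R] [IsOrderedRegular R] {p : M → R}

lemma bddBelow_directionalInf (hp : IsSublinear p) (x u : M) :
    BddBelow (range fun f : {f : R // 0 ≤ f} => p (u + f.1 • x) - f.1 * p x) := by
  refine ⟨-p (-u), ?_⟩
  rintro _ ⟨f, rfl⟩
  have h := hp.add_le (u + f.1 • x) (-u)
  rw [add_neg_cancel_comm, hp.map_smul_of_nonneg f.2] at h
  rwa [neg_le_sub_iff_le_add]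

lemma directionalInf_le (hp : IsSublinear p) (x u : M) {f : R} (hf : 0 ≤ f) :
    directionalInf p x u ≤ p (u + f • x) - f * p x :=
  ciInf_le (hp.bddBelow_directionalInf x u) ⟨f, hf⟩

lemma directionalInf_le_self (hp : IsSublinear p) (x : M) : directionalInf p x ≤ p := fun u => by
  simpa using hp.directionalInf_le x u le_rfl

lemma directionalInf_le_sub (hp : IsSublinear p) (x u : M) :
    directionalInf p x u ≤ p (u + x) - p x := by
  simpa using hp.directionalInf_le x u zero_le_one

protected lemma directionalInf (hp : IsSublinear p) (x : M) : IsSublinear (directionalInf p x) where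
  add_le u w := by
    have : Nonempty {f : R // 0 ≤ f} := ⟨⟨0, le_rfl⟩⟩
    refine le_ciInf_add_ciInf fun f g => ?_
    calc directionalInf p x (u + w)
        ≤ p (u + w + (f.1 + g.1) • x) - (f.1 + g.1) * p x :=
          hp.directionalInf_le x _ (add_nonneg f.2 g.2)
      _ = p ((u + f.1 • x) + (w + g.1 • x)) - (f.1 + g.1) * p x := by
          rw [add_smul, add_add_add_comm]
      _ ≤ p (u + f.1 • x) + p (w + g.1 • x) - (f.1 + g.1) * p x := by
          gcongr
          exact hp.add_le _ _
      _ = (p (u + f.1 • x) - f.1 * p x) + (p (w + g.1 • x) - g.1 * p x) := by ring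
  smul_le f hf u := by
    have : Nonempty {f : R // 0 ≤ f} := ⟨⟨0, le_rfl⟩⟩
    refine le_mul_of_isGLB (isGLB_ciInf (hp.bddBelow_directionalInf x u)) (range_nonempty _) hf ?_
    rintro _ ⟨g, rfl⟩
    calc directionalInf p x (f • u) ≤ p (f • u + (f * g.1) • x) - f * g.1 * p x :=
          hp.directionalInf_le x _ (mul_nonneg hf g.2)
      _ = f * (p (u + g.1 • x) - g.1 * p x) := by
          rw [mul_smul, ← smul_add, hp.map_smul_of_nonneg hf, mul_sub, mul_assoc]

-- A minimal `p` equals its `directionalInf p x`, hence is superadditive.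
lemma exists_linearMap_eq_of_minimal (hp : Minimal IsSublinear p) :
    ∃ ω : M →ₗ[R] R, ⇑ω = p := by
  have hadd : ∀ u x, p (u + x) = p u + p x := fun u x =>
    le_antisymm (hp.prop.add_le u x) <| le_sub_iff_add_le.1 <|
      (hp.le_of_le (hp.prop.directionalInf x) (hp.prop.directionalInf_le_self x) u).trans
        (hp.prop.directionalInf_le_sub x u)
  let φ : M →+ R := ⟨⟨p, hp.prop.map_zero⟩, hadd⟩
  have hsmul : ∀ (f : R) u, φ (f • u) = f * φ u := fun f u => by
    have hnonneg : ∀ g : R, 0 ≤ g → φ (g • u) = g * φ u := fun g hg =>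
      hp.prop.map_smul_of_nonneg hg u
    rw [← posPart_sub_negPart f, sub_smul, map_sub, hnonneg _ (posPart_nonneg f),
      hnonneg _ (negPart_nonneg f), sub_mul]
  exact ⟨{ φ with map_smul' := hsmul }, rfl⟩

theorem exists_linearMap_le (hp : IsSublinear p) : ∃ ω : M →ₗ[R] R, ⇑ω ≤ p := by
  obtain ⟨m, hmp, hm⟩ := hp.exists_minimal_le
  obtain ⟨ω, rfl⟩ := exists_linearMap_eq_of_minimal hm
  exact ⟨ω, hmp⟩

theorem exists_linearMap_le_map_eq (hp : IsSublinear p) (v : M) :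
    ∃ ω : M →ₗ[R] R, ⇑ω ≤ p ∧ ω v = p v := by
  obtain ⟨ω, hω⟩ := (hp.directionalInf v).exists_linearMap_le
  have hωp : ⇑ω ≤ p := hω.trans (hp.directionalInf_le_self v)
  have hneg := (hω (-v)).trans (hp.directionalInf_le_sub v (-v))
  rw [neg_add_cancel, hp.map_zero, zero_sub, map_neg, neg_le_neg_iff] at hneg
  exact ⟨ω, hωp, (hωp v).antisymm hneg⟩

end IsSublinear

end HahnBanach

/-! ### The ordered ring `L⁰` -/

section L0

variable {μ : Measure X}

instance : IsOrderedRing (L0 μ) :=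
  Function.Injective.isOrderedRing AEEqFun.toGerm AEEqFun.zero_toGerm AEEqFun.one_toGerm
    AEEqFun.add_toGerm AEEqFun.mul_toGerm Iff.rfl

instance : IsOrderedRegular (L0 μ) where
  exists_quasiInv f hf := by
    have hj := AEEqFun.coeFn_compMeasurable (fun t : ℝ => t⁻¹) measurable_inv f
    set j := AEEqFun.compMeasurable (fun t : ℝ => t⁻¹) measurable_inv f
    refine ⟨j, ?_, ?_, ?_⟩
    · rw [← AEEqFun.coeFn_le] at hf ⊢
      filter_upwards [hf, hj, AEEqFun.coeFn_zero (μ := μ) (β := ℝ)] with x hfx hjx h0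
      rw [h0] at hfx ⊢
      rw [hjx]
      exact inv_nonneg.2 hfx
    · apply AEEqFun.ext
      filter_upwards [hj, AEEqFun.coeFn_mul (f * j) f, AEEqFun.coeFn_mul f j] with x hjx h₁ h₂
      rw [h₁, Pi.mul_apply, h₂, Pi.mul_apply, hjx]
      exact mul_inv_mul_cancel _
    · rw [← AEEqFun.coeFn_le]
      filter_upwards [hj, AEEqFun.coeFn_one (μ := μ) (β := ℝ), AEEqFun.coeFn_mul f j]
        with x hjx h₁ h₂
      rw [h₂, Pi.mul_apply, h₁, hjx]
      exact mul_inv_le_one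

lemma ae_le_of_withDensity_le [SigmaFinite μ] {p q : X → ENNReal} (hp : Measurable p)
    (h : μ.withDensity p ≤ μ.withDensity q) : p ≤ᵐ[μ] q :=
  ae_le_of_forall_setLIntegral_le_of_sigmaFinite hp fun t ht _ => by
    rw [← withDensity_apply _ ht, ← withDensity_apply _ ht]
    exact h t

-- The infimum is the Radon–Nikodym density of the infimum of the measures `p · μ`.
lemma exists_measurable_essInf [SigmaFinite μ] {s : Set (X → ENNReal)} {p₀ : X → ENNReal}
    (hp₀ : p₀ ∈ s) (hfin : ∀ x, p₀ x ≠ ⊤) :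
    ∃ d, Measurable d ∧ (∀ p ∈ s, d ≤ᵐ[μ] p) ∧
      ∀ b, Measurable b → (∀ p ∈ s, b ≤ᵐ[μ] p) → b ≤ᵐ[μ] d := by
  let ν : Measure X := sInf (μ.withDensity '' s)
  have hν : ∀ p ∈ s, ν ≤ μ.withDensity p := fun p hp => sInf_le ⟨p, hp, rfl⟩
  have : SigmaFinite (μ.withDensity p₀) := SigmaFinite.withDensity_of_ne_top (ae_of_all _ hfin)
  have : SigmaFinite ν := Measure.sigmaFinite_of_le _ (hν p₀ hp₀)
  have hac : ν ≪ μ := (Measure.absolutelyContinuous_of_le (hν p₀ hp₀)).trans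
    (withDensity_absolutelyContinuous _ _)
  have hd : μ.withDensity (ν.rnDeriv μ) = ν := Measure.withDensity_rnDeriv_eq _ _ hac
  refine ⟨ν.rnDeriv μ, Measure.measurable_rnDeriv _ _, fun p hp => ?_, fun b hb hbs => ?_⟩
  · exact ae_le_of_withDensity_le (Measure.measurable_rnDeriv _ _) (hd.trans_le (hν p hp))
  · refine ae_le_of_withDensity_le hb (hd.symm ▸ le_sInf ?_)
    rintro _ ⟨p, hp, rfl⟩
    exact withDensity_mono (hbs p hp)

lemma exists_isGLB [SFinite μ] {s : Set (L0 μ)} (hb : BddBelow s) (hs : s.Nonempty) :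
    ∃ a, IsGLB s a := by
  obtain ⟨b₀, hb₀⟩ := hb
  obtain ⟨g₀, hg₀⟩ := hs
  let D : L0 μ → X → ENNReal := fun g x => ENNReal.ofReal (g x - b₀ x)
  have hD : ∀ g, Measurable (D g) := fun g => (g.measurable.sub b₀.measurable).ennreal_ofReal
  obtain ⟨d, hd, hle, hge⟩ := exists_measurable_essInf (μ := μ.toFinite) (s := D '' s)
    (mem_image_of_mem D hg₀) (fun _ => ENNReal.ofReal_ne_top)
  simp only [forall_mem_image, EventuallyLE, ae_toFinite] at hle hge
  let r : L0 μ := AEEqFun.mk (fun x => (d x).toReal) hd.ennreal_toReal.aestronglyMeasurable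
  have hr : ∀ᵐ x ∂μ, (b₀ + r : L0 μ) x = b₀ x + (d x).toReal := by
    filter_upwards [AEEqFun.coeFn_add b₀ r, AEEqFun.coeFn_mk (μ := μ) (fun x => (d x).toReal) _]
      with x h₁ h₂
    rw [h₁, Pi.add_apply, h₂]
  refine ⟨b₀ + r, fun g hg => ?_, fun b hbs => ?_⟩
  · rw [← AEEqFun.coeFn_le]
    filter_upwards [hr, hle hg, AEEqFun.coeFn_le.2 (hb₀ hg)] with x hx hdg hbg
    have := ENNReal.toReal_le_of_le_ofReal (sub_nonneg.2 hbg) hdg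
    linarith
  · have hbd : ∀ᵐ x ∂μ, D b x ≤ d x := hge _ (hD b) fun g hg => by
      filter_upwards [AEEqFun.coeFn_le.2 (hbs hg)] with x hx
      exact ENNReal.ofReal_le_ofReal (sub_le_sub_right hx _)
    rw [← AEEqFun.coeFn_le]
    filter_upwards [hr, hbd, hle hg₀] with x hx hbx hdx
    have := (ENNReal.ofReal_le_iff_le_toReal (ne_top_of_le_ne_top ENNReal.ofReal_ne_top hdx)).1 hbx
    linarith

open Classical in
instance [SFinite μ] : ConditionallyCompleteLattice (L0 μ) :=
  letI : InfSet (L0 μ) := ⟨fun s => if h : ∃ a, IsGLB s a then h.choose else 0⟩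
  conditionallyCompleteLatticeOfLatticeOfsInf (L0 μ) fun s hb hs => by
    have h := exists_isGLB hb hs
    have hsInf : sInf s = h.choose := dif_pos h
    exact hsInf ▸ h.choose_spec

end L0

/-! ### The distance of convergence in measure -/

section Dist

lemma min_abs_add_le (a b : ℝ) : min |a + b| 1 ≤ min |a| 1 + min |b| 1 := by
  have := abs_add_le a b
  have := abs_nonneg a
  have := abs_nonneg b
  grind

lemma min_abs_mul_le (a b : ℝ) {t : ℝ} (ht : 0 < t) (ht₁ : t ≤ 1) :
    min |a * b| 1 ≤ min |t * a| 1 + t⁻¹ * min |b| 1 := by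
  have hb : 0 ≤ t⁻¹ * min |b| 1 := mul_nonneg (by positivity) (le_min (abs_nonneg b) zero_le_one)
  rcases le_total 1 |t * a| with hta | hta
  · rw [min_eq_right hta]
    exact (min_le_right _ _).trans (le_add_of_nonneg_right hb)
  refine le_add_of_nonneg_of_le (le_min (abs_nonneg _) zero_le_one) ?_
  rcases le_total |b| 1 with hb₁ | hb₁
  · calc min |a * b| 1 ≤ |a * b| := min_le_left _ _
      _ = t⁻¹ * (|t * a| * |b|) := by rw [abs_mul, abs_mul, abs_of_pos ht]; field_simp
      _ ≤ t⁻¹ * (1 * |b|) := by gcongr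
      _ = t⁻¹ * min |b| 1 := by rw [one_mul, min_eq_left hb₁]
  · rw [min_eq_right hb₁, mul_one]
    exact (min_le_right _ _).trans ((one_le_inv₀ ht).2 ht₁)

variable {μ : Measure X} [SFinite μ]

lemma dL0_zero_right (f : L0 μ) : dL0 μ f 0 = ∫ x, min |f x| 1 ∂μ.toFinite := by
  refine integral_congr_ae ?_
  rw [EventuallyEq, ae_toFinite]
  filter_upwards [AEEqFun.coeFn_zero (μ := μ) (β := ℝ)] with x hx
  rw [hx, Pi.zero_apply, sub_zero]

lemma dL0_self (f : L0 μ) : dL0 μ f f = 0 := by simp [dL0]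

lemma integrable_min_abs (f : L0 μ) : Integrable (fun x => min |f x| 1) μ.toFinite := by
  refine Integrable.of_bound (C := 1)
    (f.measurable.norm.min measurable_const).aestronglyMeasurable (ae_of_all _ fun x => ?_)
  rw [Real.norm_eq_abs, abs_of_nonneg (le_min (abs_nonneg _) zero_le_one)]
  exact min_le_right _ _

lemma dL0_nonneg (f : L0 μ) : 0 ≤ dL0 μ f 0 := by
  rw [dL0_zero_right]
  exact integral_nonneg fun x => le_min (abs_nonneg _) zero_le_one

lemma dL0_mono {f g : L0 μ} (hf : 0 ≤ f) (h : f ≤ g) : dL0 μ f 0 ≤ dL0 μ g 0 := by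
  rw [dL0_zero_right, dL0_zero_right]
  refine integral_mono_ae (integrable_min_abs f) (integrable_min_abs g) ?_
  rw [EventuallyLE, ae_toFinite]
  filter_upwards [AEEqFun.coeFn_le.2 hf, AEEqFun.coeFn_le.2 h,
    AEEqFun.coeFn_zero (μ := μ) (β := ℝ)] with x hfx hx h0
  rw [h0] at hfx
  exact min_le_min_right _ (abs_le_abs_of_nonneg hfx hx)

lemma dL0_add_le (f g : L0 μ) : dL0 μ (f + g) 0 ≤ dL0 μ f 0 + dL0 μ g 0 := by
  rw [dL0_zero_right, dL0_zero_right, dL0_zero_right,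
    ← integral_add (integrable_min_abs f) (integrable_min_abs g)]
  refine integral_mono_ae (integrable_min_abs _)
    ((integrable_min_abs f).add (integrable_min_abs g)) ?_
  rw [EventuallyLE, ae_toFinite]
  filter_upwards [AEEqFun.coeFn_add f g] with x hx
  rw [hx]
  exact min_abs_add_le _ _

lemma eq_zero_of_dL0_eq_zero {f : L0 μ} (h : dL0 μ f 0 = 0) : f = 0 := by
  rw [dL0_zero_right, integral_eq_zero_iff_of_nonneg
    (fun x => le_min (abs_nonneg _) zero_le_one) (integrable_min_abs f), EventuallyEq,
    ae_toFinite] at h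
  apply AEEqFun.ext
  filter_upwards [h, AEEqFun.coeFn_zero (μ := μ) (β := ℝ)] with x hx h0
  rw [h0, Pi.zero_apply]
  rcases min_eq_iff.1 hx with ⟨hfx, -⟩ | ⟨h1, -⟩
  · exact abs_eq_zero.1 hfx
  · exact absurd h1 one_ne_zero

lemma nonpos_of_forall_dL0_lt {r : L0 μ}
    (h : ∀ ε : ℝ, 0 < ε → ∃ s : L0 μ, 0 ≤ s ∧ r ≤ s ∧ dL0 μ s 0 < ε) : r ≤ 0 := by
  have hpos : dL0 μ (r ⊔ 0) 0 ≤ 0 := le_of_forall_gt fun ε hε => by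
    obtain ⟨s, hs0, hrs, hs⟩ := h ε hε
    exact (dL0_mono le_sup_right (sup_le hrs hs0)).trans_lt hs
  exact le_sup_left.trans (eq_zero_of_dL0_eq_zero (hpos.antisymm (dL0_nonneg _))).le

lemma dL0_mul_le (k f : L0 μ) {t : ℝ} (ht : 0 < t) (ht₁ : t ≤ 1) :
    dL0 μ (k * f) 0 ≤ dL0 μ (t • k) 0 + t⁻¹ * dL0 μ f 0 := by
  have hint := (integrable_min_abs f).const_mul t⁻¹
  rw [dL0_zero_right, dL0_zero_right, dL0_zero_right, ← integral_const_mul,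
    ← integral_add (integrable_min_abs _) hint]
  refine integral_mono_ae (integrable_min_abs _) ((integrable_min_abs _).add hint) ?_
  rw [EventuallyLE, ae_toFinite]
  filter_upwards [AEEqFun.coeFn_mul k f, AEEqFun.coeFn_smul t k] with x hmul hsmul
  rw [hmul, hsmul]
  exact min_abs_mul_le _ _ ht ht₁

lemma tendsto_dL0_smul_zero (k : L0 μ) :
    Tendsto (fun t : ℝ => dL0 μ (t • k) 0) (nhds 0) (nhds 0) := by
  have hsmul : ∀ t : ℝ, dL0 μ (t • k) 0 = ∫ x, min |t * k x| 1 ∂μ.toFinite := fun t => by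
    rw [dL0_zero_right]
    refine integral_congr_ae ?_
    rw [EventuallyEq, ae_toFinite]
    filter_upwards [AEEqFun.coeFn_smul t k] with x hx
    rw [hx, Pi.smul_apply, smul_eq_mul]
  have hlim : ∀ x, Tendsto (fun t : ℝ => min |t * k x| 1) (nhds 0) (nhds 0) := fun x => by
    have hcont : Continuous fun t : ℝ => min |t * k x| 1 := by fun_prop
    simpa using hcont.tendsto 0
  have hbound : ∀ t x, ‖min |t * k x| 1‖ ≤ 1 := fun t x => by
    rw [Real.norm_eq_abs, abs_of_nonneg (le_min (abs_nonneg _) zero_le_one)]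
    exact min_le_right _ _
  have hint := tendsto_integral_filter_of_dominated_convergence
    (μ := μ.toFinite) (fun _ => (1 : ℝ)) (Eventually.of_forall fun t =>
      ((k.measurable.const_mul t).norm.min measurable_const).aestronglyMeasurable)
    (Eventually.of_forall fun t => ae_of_all _ (hbound t)) (integrable_const 1) (ae_of_all _ hlim)
  rw [integral_zero] at hint
  exact hint.congr fun t => (hsmul t).symm

lemma exists_forall_dL0_mul_lt (k : L0 μ) {ε : ℝ} (hε : 0 < ε) :
    ∃ δ > 0, ∀ f : L0 μ, dL0 μ f 0 < δ → dL0 μ (k * f) 0 < ε := by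
  have hsmall : ∀ᶠ t : ℝ in nhdsWithin 0 (Ioi 0), dL0 μ (t • k) 0 < ε / 2 :=
    ((tendsto_dL0_smul_zero k).mono_left nhdsWithin_le_nhds).eventually (gt_mem_nhds (half_pos hε))
  obtain ⟨t, htk, ht, ht₁⟩ := (hsmall.and (Ioc_mem_nhdsGT zero_lt_one)).exists
  refine ⟨t * (ε / 2), mul_pos ht (half_pos hε), fun f hf => ?_⟩
  have hf' : t⁻¹ * dL0 μ f 0 < ε / 2 := (inv_mul_lt_iff₀ ht).2 hf
  linarith [dL0_mul_le k f ht ht₁]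

end Dist

/-! ### Pointwise norms -/

section Norm

variable {μ : Measure X} [SFinite μ]
variable {M N : Type*} [AddCommGroup M] [Module (L0 μ) M] [BanachMod μ M]
  [AddCommGroup N] [Module (L0 μ) N] [BanachMod μ N]

lemma pn_nonneg (v : M) : 0 ≤ pn μ v := BanachMod.pn_nonneg v

lemma pn_add_le (v w : M) : pn μ (v + w) ≤ pn μ v + pn μ w := BanachMod.pn_add_le v w

lemma pn_smul (f : L0 μ) (v : M) : pn μ (f • v) = |f| * pn μ v := BanachMod.pn_smul f v

lemma pn_zero : pn μ (0 : M) = 0 := (BanachMod.pn_eq_zero 0).2 rfl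

lemma eq_zero_of_pn_nonpos {v : M} (h : pn μ v ≤ 0) : v = 0 :=
  (BanachMod.pn_eq_zero v).1 (h.antisymm (pn_nonneg v))

lemma pn_smul_of_nonneg {f : L0 μ} (hf : 0 ≤ f) (v : M) : pn μ (f • v) = f * pn μ v := by
  rw [pn_smul, abs_of_nonneg hf]

lemma pn_neg (v : M) : pn μ (-v) = pn μ v := by
  rw [← neg_one_smul (L0 μ) v, pn_smul, abs_neg, abs_of_nonneg zero_le_one, one_mul]

lemma pn_sub_comm (v w : M) : pn μ (v - w) = pn μ (w - v) := by
  rw [← pn_neg, neg_sub]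

lemma pn_le_pn_sub_add (v w : M) : pn μ v ≤ pn μ (v - w) + pn μ w := by
  simpa only [sub_add_cancel] using pn_add_le (μ := μ) (v - w) w

lemma pn_sum_le {ι : Type*} (s : Finset ι) (v : ι → M) :
    pn μ (∑ i ∈ s, v i) ≤ ∑ i ∈ s, pn μ (v i) :=
  Finset.le_sum_of_subadditive _ pn_zero.le pn_add_le s v

lemma dM_self (v : M) : dM μ v v = 0 := by
  rw [dM, sub_self, pn_zero, dL0_self]

lemma dM_add_add_le (v v' w w' : M) : dM μ (v + v') (w + w') ≤ dM μ v w + dM μ v' w' := by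
  rw [dM, add_sub_add_comm]
  exact (dL0_mono (pn_nonneg _) (pn_add_le _ _)).trans (dL0_add_le _ _)

lemma dM_triangle_right (u v w : M) : dM μ u w ≤ dM μ u v + dM μ w v := by
  have h := dM_add_add_le (μ := μ) u (-w) v (-v)
  simpa only [dM, add_neg_cancel, ← sub_eq_add_neg, sub_zero, sub_neg_eq_add, neg_add_eq_sub,
    pn_sub_comm v w] using h

lemma exists_forall_dM_lt_of_pn_sub_le (k : L0 μ) {ε : ℝ} (hε : 0 < ε) :
    ∃ δ > 0, ∀ (v w : M) (v' w' : N),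
      pn μ (v' - w') ≤ k * pn μ (v - w) → dM μ v w < δ → dM μ v' w' < ε := by
  obtain ⟨δ, hδ, hk⟩ := exists_forall_dL0_mul_lt k hε
  exact ⟨δ, hδ, fun v w v' w' h hvw => (dL0_mono (pn_nonneg _) h).trans_lt (hk _ hvw)⟩

end Norm

/-! ### Extension by density -/

section Extension

variable {μ : Measure X} [SFinite μ]
variable {A P P' : Type*} [AddCommGroup A] [Module (L0 μ) A]
  [AddCommGroup P] [Module (L0 μ) P] [BanachMod μ P]
  [AddCommGroup P'] [Module (L0 μ) P'] [BanachMod μ P']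

/-- Density of the range of a map into a Banach `L⁰(𝕏)`-module, for the distance `dM`; the domain
carries no topology. -/
def HasDenseRange (μ : Measure X) [SFinite μ] {A P : Type*} [AddCommGroup P] [Module (L0 μ) P]
    [BanachMod μ P] (e : A → P) : Prop :=
  ∀ p : P, ∀ ε : ℝ, 0 < ε → ∃ α, dM μ (e α) p < ε

/-- The closure in `P × P'` of the set of pairs `(e α, L α)`. When `e` has dense range and `L` is
bounded in terms of `e`, it is the graph of the continuous extension of `L` along `e`. -/
def graphClosure (e : A →ₗ[L0 μ] P) (L : A →ₗ[L0 μ] P') : Submodule (L0 μ) (P × P') where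
  carrier := {x | ∀ ε : ℝ, 0 < ε → ∃ α, dM μ (e α) x.1 < ε ∧ dM μ (L α) x.2 < ε}
  zero_mem' ε hε := ⟨0, by simpa [dM_self] using hε⟩
  add_mem' {x y} hx hy ε hε := by
    obtain ⟨α, hα, hα'⟩ := hx (ε / 2) (half_pos hε)
    obtain ⟨β, hβ, hβ'⟩ := hy (ε / 2) (half_pos hε)
    refine ⟨α + β, ?_, ?_⟩ <;> rw [map_add]
    · exact (dM_add_add_le _ _ _ _).trans_lt (by linarith)
    · exact (dM_add_add_le _ _ _ _).trans_lt (by linarith)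
  smul_mem' f x hx ε hε := by
    obtain ⟨δ, hδ, h⟩ := exists_forall_dM_lt_of_pn_sub_le (M := P) (N := P) |f| hε
    obtain ⟨δ', hδ', h'⟩ := exists_forall_dM_lt_of_pn_sub_le (M := P') (N := P') |f| hε
    obtain ⟨α, hα, hα'⟩ := hx (min δ δ') (lt_min hδ hδ')
    refine ⟨f • α, h _ _ _ _ ?_ (hα.trans_le (min_le_left _ _)),
      h' _ _ _ _ ?_ (hα'.trans_le (min_le_right _ _))⟩
    · rw [map_smul, Prod.smul_fst, ← smul_sub, pn_smul]
    · rw [map_smul, Prod.smul_snd, ← smul_sub, pn_smul]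

variable {e : A →ₗ[L0 μ] P} {L : A →ₗ[L0 μ] P'} {k : L0 μ}

lemma map_mem_graphClosure (α : A) : (e α, L α) ∈ graphClosure e L := fun ε hε =>
  ⟨α, by simpa only [dM_self, and_self] using hε⟩

lemma pn_snd_le_of_mem_graphClosure (hk : 0 ≤ k) (hL : ∀ α, pn μ (L α) ≤ k * pn μ (e α))
    {x : P × P'} (hx : x ∈ graphClosure e L) : pn μ x.2 ≤ k * pn μ x.1 := by
  rw [← sub_nonpos]
  refine nonpos_of_forall_dL0_lt fun ε hε => ?_
  obtain ⟨δ, hδ, hmul⟩ := exists_forall_dL0_mul_lt k (half_pos hε)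
  obtain ⟨α, hα, hα'⟩ := hx (min δ (ε / 2)) (lt_min hδ (half_pos hε))
  have hkα : dL0 μ (k * pn μ (e α - x.1)) 0 < ε / 2 := hmul _ (hα.trans_le (min_le_left _ _))
  have hLα : dL0 μ (pn μ (L α - x.2)) 0 < ε / 2 := hα'.trans_le (min_le_right _ _)
  refine ⟨pn μ (L α - x.2) + k * pn μ (e α - x.1),
    add_nonneg (pn_nonneg _) (mul_nonneg hk (pn_nonneg _)), ?_,
    (dL0_add_le _ _).trans_lt (by linarith)⟩
  rw [sub_le_iff_le_add]
  calc pn μ x.2 ≤ pn μ (x.2 - L α) + pn μ (L α) := pn_le_pn_sub_add _ _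
    _ ≤ pn μ (L α - x.2) + k * (pn μ (e α - x.1) + pn μ x.1) := by
        rw [pn_sub_comm]
        gcongr
        exact (hL α).trans (mul_le_mul_of_nonneg_left (pn_le_pn_sub_add _ _) hk)
    _ = pn μ (L α - x.2) + k * pn μ (e α - x.1) + k * pn μ x.1 := by ring

lemma exists_mem_graphClosure (he : HasDenseRange μ e)
    (hL : ∀ α, pn μ (L α) ≤ k * pn μ (e α)) (p : P) : ∃ q, (p, q) ∈ graphClosure e L := by
  choose α hα using fun n : ℕ => he p (1 / ((n : ℝ) + 1)) Nat.one_div_pos_of_nat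
  have hsmall : ∀ ε : ℝ, 0 < ε → ∀ᶠ n in atTop, dM μ (e (α n)) p < ε := fun ε hε =>
    (tendsto_one_div_add_atTop_nhds_zero_nat.eventually (gt_mem_nhds hε)).mono
      fun n hn => (hα n).trans hn
  obtain ⟨q, hq⟩ := BanachMod.complete (μ := μ) (fun n => L (α n)) fun ε hε => by
    obtain ⟨δ, hδ, h⟩ := exists_forall_dM_lt_of_pn_sub_le (M := P) (N := P') k hε
    obtain ⟨n₀, hn₀⟩ := eventually_atTop.1 (hsmall (δ / 2) (half_pos hδ))
    refine ⟨n₀, fun m hm n hn => h (e (α m)) (e (α n)) _ _ ?_ ?_⟩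
    · rw [← map_sub, ← map_sub]
      exact hL _
    · linarith [dM_triangle_right (μ := μ) (e (α m)) p (e (α n)), hn₀ m hm, hn₀ n hn]
  refine ⟨q, fun ε hε => ?_⟩
  obtain ⟨n, hn, hn'⟩ := ((hsmall ε hε).and (hq.eventually (gt_mem_nhds hε))).exists
  exact ⟨α n, hn, hn'⟩

lemma exists_linearMap_graphClosure (he : HasDenseRange μ e) (hk : 0 ≤ k)
    (hL : ∀ α, pn μ (L α) ≤ k * pn μ (e α)) :
    ∃ F : P →ₗ[L0 μ] P', ∀ x ∈ graphClosure e L, F x.1 = x.2 := by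
  let π : graphClosure e L →ₗ[L0 μ] P := LinearMap.fst (L0 μ) P P' ∘ₗ (graphClosure e L).subtype
  have hinj : Function.Injective π := (injective_iff_map_eq_zero π).2 fun x (hx : x.1.1 = 0) => by
    have hx₂ := pn_snd_le_of_mem_graphClosure hk hL x.2
    rw [hx, pn_zero, mul_zero] at hx₂
    exact Subtype.ext (Prod.ext hx (eq_zero_of_pn_nonpos hx₂))
  have hsurj : Function.Surjective π := fun p =>
    let ⟨q, hq⟩ := exists_mem_graphClosure he hL p
    ⟨⟨(p, q), hq⟩, rfl⟩
  let E := LinearEquiv.ofBijective π ⟨hinj, hsurj⟩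
  refine ⟨LinearMap.snd (L0 μ) P P' ∘ₗ (graphClosure e L).subtype ∘ₗ E.symm, fun x hx => ?_⟩
  have hEx : E.symm x.1 = ⟨x, hx⟩ := E.symm_apply_apply ⟨x, hx⟩
  simp [hEx]

theorem exists_isHom_extension (he : HasDenseRange μ e) (hk : 0 ≤ k)
    (hL : ∀ α, pn μ (L α) ≤ k * pn μ (e α)) :
    ∃ F : P →ₗ[L0 μ] P', IsHom μ F ∧ ∀ α, F (e α) = L α := by
  obtain ⟨F, hF⟩ := exists_linearMap_graphClosure he hk hL
  refine ⟨F, ⟨k, hk, fun p => ?_⟩, fun α => hF _ (map_mem_graphClosure α)⟩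
  obtain ⟨q, hq⟩ := exists_mem_graphClosure he hL p
  rw [hF _ hq]
  exact pn_snd_le_of_mem_graphClosure hk hL hq

lemma mem_homBddSet_of_hasDenseRange (he : HasDenseRange μ e) {F : P →ₗ[L0 μ] P'}
    (hF : IsHom μ F) (hk : 0 ≤ k) (h : ∀ α, pn μ (F (e α)) ≤ k * pn μ (e α)) :
    k ∈ homBddSet μ F := by
  obtain ⟨g, -, hg⟩ := hF
  refine ⟨hk, fun p => pn_snd_le_of_mem_graphClosure (e := e) (L := F ∘ₗ e) (x := (p, F p)) hk h
    fun ε hε => ?_⟩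
  obtain ⟨δ, hδ, hFδ⟩ := exists_forall_dM_lt_of_pn_sub_le (M := P) (N := P') g hε
  obtain ⟨α, hα⟩ := he p (min δ ε) (lt_min hδ hε)
  refine ⟨α, hα.trans_le (min_le_right _ _), hFδ _ _ _ _ ?_ (hα.trans_le (min_le_left _ _))⟩
  rw [LinearMap.comp_apply, ← map_sub]
  exact hg _

lemma IsHom.sub {F G : P →ₗ[L0 μ] P'} (hF : IsHom μ F) (hG : IsHom μ G) : IsHom μ (F - G) := by
  obtain ⟨f, hf₀, hf⟩ := hF
  obtain ⟨g, hg₀, hg⟩ := hG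
  refine ⟨f + g, add_nonneg hf₀ hg₀, fun p => ?_⟩
  calc pn μ (F p - G p) ≤ pn μ (F p) + pn μ (G p) := by
        rw [sub_eq_add_neg, ← pn_neg (G p)]
        exact pn_add_le _ _
    _ ≤ (f + g) * pn μ p := by
        rw [add_mul]
        exact add_le_add (hf p) (hg p)

theorem IsHom.eq_of_hasDenseRange (he : HasDenseRange μ e) {F G : P →ₗ[L0 μ] P'}
    (hF : IsHom μ F) (hG : IsHom μ G) (h : ∀ α, F (e α) = G (e α)) : F = G := by
  have hzero : 0 ∈ homBddSet μ ⇑(F - G) :=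
    mem_homBddSet_of_hasDenseRange he (hF.sub hG) le_rfl fun α => by
      rw [LinearMap.sub_apply, h, sub_self, pn_zero, zero_mul]
  ext p
  exact sub_eq_zero.1 (eq_zero_of_pn_nonpos ((hzero.2 p).trans_eq (zero_mul _)))

end Extension

/-! ### Projective tensor products -/

section Tensor

variable {μ : Measure X} [SFinite μ]
variable {M N P M' N' P' : Type*}
  [AddCommGroup M] [Module (L0 μ) M] [BanachMod μ M]
  [AddCommGroup N] [Module (L0 μ) N] [BanachMod μ N]
  [AddCommGroup P] [Module (L0 μ) P] [BanachMod μ P]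
  [AddCommGroup M'] [Module (L0 μ) M'] [BanachMod μ M']
  [AddCommGroup N'] [Module (L0 μ) N'] [BanachMod μ N']
  [AddCommGroup P'] [Module (L0 μ) P'] [BanachMod μ P']
  {e : M ⊗[L0 μ] N →ₗ[L0 μ] P} {e' : M' ⊗[L0 μ] N' →ₗ[L0 μ] P'}
  {T : M →ₗ[L0 μ] M'} {S : N →ₗ[L0 μ] N'}

theorem exists_inDualDisc_map_eq_pn (v : M) :
    ∃ ω : M →ₗ[L0 μ] L0 μ, InDualDisc μ ω ∧ ω v = pn μ v := by
  have hpn : IsSublinear (pn μ : M → L0 μ) :=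
    ⟨pn_add_le, fun f hf u => (pn_smul_of_nonneg hf u).le⟩
  obtain ⟨ω, hω, hωv⟩ := hpn.exists_linearMap_le_map_eq v
  refine ⟨ω, fun u => abs_le'.2 ⟨hω u, ?_⟩, hωv⟩
  rw [← map_neg, ← pn_neg]
  exact hω (-u)

lemma piReps_nonempty (α : M ⊗[L0 μ] N) : (piReps μ α).Nonempty := by
  obtain ⟨n, v, w, h⟩ := TensorProduct.exists_sum_tmul_eq α
  exact ⟨_, n, v, w, h, rfl⟩

lemma IsPiTensor.pn_tmul_le (hP : IsPiTensor μ M N P e) (v : M) (w : N) :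
    pn μ (e (v ⊗ₜ[L0 μ] w)) ≤ pn μ v * pn μ w :=
  (hP.pn_emb _).1 ⟨1, fun _ => v, fun _ => w, by simp, by simp⟩

-- If `ω` norms `v`, then `a ⊗ b ↦ ω a • b` is bounded by `|·|_π` and sends `v ⊗ w` to `|v| • w`.
lemma IsPiTensor.le_pn_tmul (hP : IsPiTensor μ M N P e) (v : M) (w : N) :
    pn μ v * pn μ w ≤ pn μ (e (v ⊗ₜ[L0 μ] w)) := by
  obtain ⟨ω, hω, hv⟩ := exists_inDualDisc_map_eq_pn (μ := μ) v
  let B : M ⊗[L0 μ] N →ₗ[L0 μ] N := TensorProduct.lift (LinearMap.lsmul (L0 μ) N ∘ₗ ω)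
  have hB : ∀ a b, B (a ⊗ₜ[L0 μ] b) = ω a • b := fun _ _ => rfl
  refine (hP.pn_emb _).2 ?_
  rintro _ ⟨n, a, b, hab, rfl⟩
  calc pn μ v * pn μ w = pn μ (B (v ⊗ₜ[L0 μ] w)) := by
        rw [hB, hv, pn_smul_of_nonneg (pn_nonneg v)]
    _ = pn μ (∑ i, ω (a i) • b i) := by simp only [hab, map_sum, hB]
    _ ≤ ∑ i, pn μ (ω (a i) • b i) := pn_sum_le _ _
    _ ≤ ∑ i, pn μ (a i) * pn μ (b i) := Finset.sum_le_sum fun i _ => by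
        rw [pn_smul]
        exact mul_le_mul_of_nonneg_right (hω _) (pn_nonneg _)

theorem IsPiTensor.pn_tmul (hP : IsPiTensor μ M N P e) (v : M) (w : N) :
    pn μ (e (v ⊗ₜ[L0 μ] w)) = pn μ v * pn μ w :=
  (hP.pn_tmul_le v w).antisymm (hP.le_pn_tmul v w)

lemma IsPiTensor.pn_map_le (hP : IsPiTensor μ M N P e) (hP' : IsPiTensor μ M' N' P' e')
    {g h : L0 μ} (hg : g ∈ homBddSet μ T) (hh : h ∈ homBddSet μ S) (α : M ⊗[L0 μ] N) :
    pn μ (e' (TensorProduct.map T S α)) ≤ g * h * pn μ (e α) := by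
  refine le_mul_of_isGLB (hP.pn_emb α) (piReps_nonempty α) (mul_nonneg hg.1 hh.1) ?_
  rintro _ ⟨n, v, w, rfl, rfl⟩
  calc pn μ (e' (TensorProduct.map T S (∑ i, v i ⊗ₜ[L0 μ] w i)))
      = pn μ (∑ i, e' (T (v i) ⊗ₜ[L0 μ] S (w i))) := by
        simp only [map_sum, TensorProduct.map_tmul]
    _ ≤ ∑ i, pn μ (e' (T (v i) ⊗ₜ[L0 μ] S (w i))) := pn_sum_le _ _
    _ ≤ ∑ i, (g * pn μ (v i)) * (h * pn μ (w i)) := Finset.sum_le_sum fun i _ => by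
        rw [hP'.pn_tmul]
        exact mul_le_mul (hg.2 _) (hh.2 _) (pn_nonneg _) (mul_nonneg hg.1 (pn_nonneg _))
    _ = g * h * ∑ i, pn μ (v i) * pn μ (w i) := by
        rw [Finset.mul_sum]
        exact Finset.sum_congr rfl fun i _ => mul_mul_mul_comm _ _ _ _

-- The function equal to `c / a` on `{a ≠ 0}` and to some bound of `f` elsewhere is a bound of `f`.
lemma mul_le_of_isGLB_homBddSet {f : M → N} {t a c : L0 μ} (ht : IsGLB (homBddSet μ f) t)
    (hf : (homBddSet μ f).Nonempty) (ha : 0 ≤ a) (hc : 0 ≤ c)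
    (h : ∀ v, a * pn μ (f v) ≤ c * pn μ v) : a * t ≤ c := by
  obtain ⟨g, hg₀, hg⟩ := hf
  obtain ⟨j, hj, haja, haj⟩ := IsOrderedRegular.exists_quasiInv a ha
  have haj' : 0 ≤ 1 - a * j := sub_nonneg.2 haj
  have hmem : j * c + (1 - a * j) * g ∈ homBddSet μ f := by
    refine ⟨by positivity, fun v => ?_⟩
    calc pn μ (f v) = j * (a * pn μ (f v)) + (1 - a * j) * pn μ (f v) := by ring
      _ ≤ j * (c * pn μ v) + (1 - a * j) * (g * pn μ v) :=
          add_le_add (mul_le_mul_of_nonneg_left (h v) hj) (mul_le_mul_of_nonneg_left (hg v) haj')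
      _ = (j * c + (1 - a * j) * g) * pn μ v := by ring
  calc a * t ≤ a * (j * c + (1 - a * j) * g) := mul_le_mul_of_nonneg_left (ht.1 hmem) ha
    _ = a * j * c + (1 - a * j) * a * g := by ring
    _ = a * j * c := by rw [one_sub_mul_quasiInv_mul haja, zero_mul, add_zero]
    _ ≤ c := mul_le_of_le_one_left hc haj

lemma mul_mem_homBddSet (hP : IsPiTensor μ M N P e) (hP' : IsPiTensor μ M' N' P' e')
    {F : P →ₗ[L0 μ] P'} (hF : IsHom μ F) (hFe : ∀ α, F (e α) = e' (TensorProduct.map T S α))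
    {g h : L0 μ} (hg : g ∈ homBddSet μ T) (hh : h ∈ homBddSet μ S) : g * h ∈ homBddSet μ F :=
  mem_homBddSet_of_hasDenseRange hP.dense hF (mul_nonneg hg.1 hh.1) fun α =>
    (hFe α).symm ▸ hP.pn_map_le hP' hg hh α

lemma mul_le_of_mem_homBddSet (hP : IsPiTensor μ M N P e) (hP' : IsPiTensor μ M' N' P' e')
    {F : P → P'} (hFe : ∀ v w, F (e (v ⊗ₜ[L0 μ] w)) = e' (T v ⊗ₜ[L0 μ] S w))
    (hT : IsHom μ T) (hS : IsHom μ S) {tT tS u : L0 μ} (htT : IsGLB (homBddSet μ T) tT)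
    (htS : IsGLB (homBddSet μ S) tS) (hu : u ∈ homBddSet μ F) : tT * tS ≤ u := by
  have hcross : ∀ v w, pn μ (T v) * pn μ (S w) ≤ u * (pn μ v * pn μ w) := fun v w =>
    calc pn μ (T v) * pn μ (S w) = pn μ (F (e (v ⊗ₜ[L0 μ] w))) := by rw [hFe, hP'.pn_tmul]
      _ ≤ u * pn μ (e (v ⊗ₜ[L0 μ] w)) := hu.2 _
      _ = u * (pn μ v * pn μ w) := by rw [hP.pn_tmul]
  have hS' : ∀ v, pn μ (T v) * tS ≤ u * pn μ v := fun v =>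
    mul_le_of_isGLB_homBddSet htS hS (pn_nonneg _) (mul_nonneg hu.1 (pn_nonneg v)) fun w =>
      (hcross v w).trans_eq (mul_assoc _ _ _).symm
  rw [mul_comm]
  exact mul_le_of_isGLB_homBddSet htT hT (htS.2 fun _ hh => hh.1) hu.1 fun v =>
    (mul_comm _ _).trans_le (hS' v)

theorem isGLB_homBddSet_tensor (hP : IsPiTensor μ M N P e) (hP' : IsPiTensor μ M' N' P' e')
    {F : P →ₗ[L0 μ] P'} (hF : IsHom μ F) (hFe : ∀ α, F (e α) = e' (TensorProduct.map T S α))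
    (hT : IsHom μ T) (hS : IsHom μ S) {tT tS : L0 μ} (htT : IsGLB (homBddSet μ T) tT)
    (htS : IsGLB (homBddSet μ S) tS) : IsGLB (homBddSet μ F) (tT * tS) :=
  ⟨fun _ hu => mul_le_of_mem_homBddSet hP hP' (fun _ _ => hFe _) hT hS htT htS hu,
    fun _ hb => le_mul_of_isGLB_of_isGLB htT htS hT hS (fun _ hg => hg.1) (fun _ hh => hh.1)
      fun _ hg _ hh => hb (mul_mem_homBddSet hP hP' hF hFe hg hh)⟩

end Tensor

theorem projective_tensor_of_homs_general
    (μ : Measure X) [SFinite μ]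
    (M : Type*) [AddCommGroup M] [Module (L0 μ) M] [BanachMod μ M]
    (N : Type*) [AddCommGroup N] [Module (L0 μ) N] [BanachMod μ N]
    (M' : Type*) [AddCommGroup M'] [Module (L0 μ) M'] [BanachMod μ M']
    (N' : Type*) [AddCommGroup N'] [Module (L0 μ) N'] [BanachMod μ N']
    (P : Type*) [AddCommGroup P] [Module (L0 μ) P] [BanachMod μ P]
    (P' : Type*) [AddCommGroup P'] [Module (L0 μ) P'] [BanachMod μ P']
    (e : M ⊗[L0 μ] N →ₗ[L0 μ] P) (hP : IsPiTensor μ M N P e)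
    (e' : M' ⊗[L0 μ] N' →ₗ[L0 μ] P') (hP' : IsPiTensor μ M' N' P' e')
    (T : M →ₗ[L0 μ] M') (S : N →ₗ[L0 μ] N') (hT : IsHom μ T) (hS : IsHom μ S) :
    ∃ TS : P →ₗ[L0 μ] P',
      (IsHom μ TS ∧ ∀ (v : M) (w : N), TS (e (v ⊗ₜ[L0 μ] w)) = e' (T v ⊗ₜ[L0 μ] S w))
      ∧ (∀ TS' : P →ₗ[L0 μ] P', IsHom μ TS' →
          (∀ (v : M) (w : N), TS' (e (v ⊗ₜ[L0 μ] w)) = e' (T v ⊗ₜ[L0 μ] S w)) → TS' = TS)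
      ∧ (∀ tT tS : L0 μ, IsGLB (homBddSet μ ⇑T) tT → IsGLB (homBddSet μ ⇑S) tS →
          IsGLB (homBddSet μ ⇑TS) (tT * tS)) := by
  have ⟨g, hg⟩ := hT
  have ⟨h, hh⟩ := hS
  obtain ⟨F, hF, hFe⟩ := exists_isHom_extension (L := e' ∘ₗ TensorProduct.map T S) hP.dense
    (mul_nonneg hg.1 hh.1) (hP.pn_map_le hP' hg hh)
  refine ⟨F, ⟨hF, fun v w => hFe (v ⊗ₜ w)⟩, fun G hG hGe => ?_, fun _ _ htT htS =>
    isGLB_homBddSet_tensor hP hP' hF hFe hT hS htT htS⟩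
  have hGF : G ∘ₗ e = F ∘ₗ e := TensorProduct.ext' fun v w => (hGe v w).trans (hFe (v ⊗ₜ w)).symm
  exact hG.eq_of_hasDenseRange hP.dense hF (LinearMap.congr_fun hGF)

/-- projective tensor product of homomorphisms. Let `T : ℳ → ℳ'` and
`S : 𝒩 → 𝒩'` be homomorphisms of Banach `L⁰(𝕏)`-modules. Then there exists a unique
homomorphism `T ⊗_π S : ℳ ⊗̂_π 𝒩 → ℳ' ⊗̂_π 𝒩'` with `(T ⊗_π S)(v ⊗ w) = T v ⊗ S w` for
all `v, w`; moreover `|T ⊗_π S| = |T||S|` (the pointwise norms being the infima of the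
corresponding sets of admissible bounds). Here `P`, `P'` are realizations of the projective
tensor products. -/
theorem projective_tensor_of_homs
    (μ : Measure X) [SigmaFinite μ]
    (M : Type*) [AddCommGroup M] [Module (L0 μ) M] [BanachMod μ M]
    (N : Type*) [AddCommGroup N] [Module (L0 μ) N] [BanachMod μ N]
    (M' : Type*) [AddCommGroup M'] [Module (L0 μ) M'] [BanachMod μ M']
    (N' : Type*) [AddCommGroup N'] [Module (L0 μ) N'] [BanachMod μ N']
    (P : Type*) [AddCommGroup P] [Module (L0 μ) P] [BanachMod μ P]
    (P' : Type*) [AddCommGroup P'] [Module (L0 μ) P'] [BanachMod μ P']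
    (e : M ⊗[L0 μ] N →ₗ[L0 μ] P) (hP : IsPiTensor μ M N P e)
    (e' : M' ⊗[L0 μ] N' →ₗ[L0 μ] P') (hP' : IsPiTensor μ M' N' P' e')
    (T : M →ₗ[L0 μ] M') (S : N →ₗ[L0 μ] N') (hT : IsHom μ T) (hS : IsHom μ S) :
    ∃ TS : P →ₗ[L0 μ] P',
      (IsHom μ TS ∧ ∀ (v : M) (w : N), TS (e (v ⊗ₜ[L0 μ] w)) = e' (T v ⊗ₜ[L0 μ] S w))
      ∧ (∀ TS' : P →ₗ[L0 μ] P', IsHom μ TS' →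
          (∀ (v : M) (w : N), TS' (e (v ⊗ₜ[L0 μ] w)) = e' (T v ⊗ₜ[L0 μ] S w)) → TS' = TS)
      ∧ (∀ tT tS tTS : L0 μ, IsGLB (homBddSet μ ⇑T) tT → IsGLB (homBddSet μ ⇑S) tS →
          IsGLB (homBddSet μ ⇑TS) tTS → tTS = tT * tS) := by
  obtain ⟨TS, hTS, huniq, hnorm⟩ :=
    projective_tensor_of_homs_general μ M N M' N' P P' e hP e' hP' T S hT hS
  exact ⟨TS, hTS, huniq, fun tT tS _ htT htS htTS => htTS.unique (hnorm tT tS htT htS)⟩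

end Paper
end
end
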